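/- arXiv:2103.15799 — 4 statements merged into one kernel-verified Lean document; each statement's English description precedes it below -/
import Mathlib

section
/- Let T be a complete first-order theory in a language L. Assume that for every model M of T, every formula φ(x;y) with parameters from M, where x and y are single variables, does not have the order property. Then T is stable, i.e., no L-formula φ(x̄;ȳ) (in any finite tuples of variables, without parameters) has the order property. -/
open FirstOrder FirstOrder.Language

universe u v

/-- An elementary extension of `M`: a structure together with an elementary embedding of `M`
into it. -/
structure ElemExt (L : FirstOrder.Language.{u, v}) (M : Type (max u v)) [L.Structure M] where
  carrier : Type (max u v)
  [str : L.Structure carrier]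
  emb : M ↪ₑ[L] carrier

attribute [instance] ElemExt.str

/-- A formula `φ(x̄; ȳ)` (without parameters) has the order property with respect to a theory
`T` if in some model of `T` there are sequences `(āᵢ : i < ω)` and `(b̄ⱼ : j < ω)` such that
`φ(āᵢ; b̄ⱼ)` holds iff `i < j`. -/
def FormulaHasOP {L : FirstOrder.Language.{u, v}} (T : L.Theory) {α β : Type*}
    (φ : L.Formula (α ⊕ β)) : Prop :=
  ∃ (N : FirstOrder.Language.Theory.ModelType.{u, v, max u v} T)
    (a : ℕ → α → N) (b : ℕ → β → N),
    ∀ i j : ℕ, φ.Realize (Sum.elim (a i) (b j)) ↔ i < j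

/-- A formula `φ(x̄; ȳ)` (without parameters) has the independence property with respect to a
theory `T` if in some model of `T` there are tuples `(āᵢ : i < ω)` and `(b̄_S : S ⊆ ω)` such
that `φ(āᵢ; b̄_S)` holds iff `i ∈ S`. -/
def FormulaHasIP {L : FirstOrder.Language.{u, v}} (T : L.Theory) {α β : Type*}
    (φ : L.Formula (α ⊕ β)) : Prop :=
  ∃ (N : FirstOrder.Language.Theory.ModelType.{u, v, max u v} T)
    (a : ℕ → α → N) (b : Set ℕ → β → N),
    ∀ (i : ℕ) (S : Set ℕ), φ.Realize (Sum.elim (a i) (b S)) ↔ i ∈ S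

/-- A formula `φ(x̄; ȳ)` with parameters `c` from `M` has the order property if in some
elementary extension of `M` there are sequences `(āᵢ : i < ω)` and `(b̄ⱼ : j < ω)` such that
`φ(āᵢ; b̄ⱼ; c)` holds iff `i < j`. -/
def HasOPWithParams {L : FirstOrder.Language.{u, v}} {M : Type (max u v)} [L.Structure M]
    {α β γ : Type*} (φ : L.Formula ((α ⊕ β) ⊕ γ)) (c : γ → M) : Prop :=
  ∃ (N : ElemExt L M) (a : ℕ → α → N.carrier) (b : ℕ → β → N.carrier),
    ∀ i j : ℕ, φ.Realize (Sum.elim (Sum.elim (a i) (b j)) (N.emb ∘ c)) ↔ i < j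

/-- A formula `φ(x̄; ȳ)` with parameters `c` from `M` has the independence property if in some
elementary extension of `M` there are tuples `(āᵢ : i < ω)` and `(b̄_S : S ⊆ ω)` such that
`φ(āᵢ; b̄_S; c)` holds iff `i ∈ S`. -/
def HasIPWithParams {L : FirstOrder.Language.{u, v}} {M : Type (max u v)} [L.Structure M]
    {α β γ : Type*} (φ : L.Formula ((α ⊕ β) ⊕ γ)) (c : γ → M) : Prop :=
  ∃ (N : ElemExt L M) (a : ℕ → α → N.carrier) (b : Set ℕ → β → N.carrier),
    ∀ (i : ℕ) (S : Set ℕ), φ.Realize (Sum.elim (Sum.elim (a i) (b S)) (N.emb ∘ c)) ↔ i ∈ S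

/-- The family of tuples `(c̄ᵢ : i ∈ ι)` is an indiscernible sequence over the set `A`:
any two strictly increasing tuples of indices realize the same formulas with parameters
from `A`. -/
def IsIndiscernibleOver {L : FirstOrder.Language.{u, v}} {M : Type (max u v)} [L.Structure M]
    {ι : Type*} [LinearOrder ι] {γ : Type*} (c : ι → γ → M) (A : Set M) : Prop :=
  ∀ (n m : ℕ) (i j : Fin n → ι), StrictMono i → StrictMono j →
    ∀ p : Fin m → M, (∀ l, p l ∈ A) →
      ∀ φ : L.Formula (Fin n × γ ⊕ Fin m),
        φ.Realize (Sum.elim (fun v : Fin n × γ => c (i v.1) v.2) p) ↔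
          φ.Realize (Sum.elim (fun v : Fin n × γ => c (j v.1) v.2) p)

/-- The family of tuples `(c̄ᵢ : i ∈ ι)` is an indiscernible sequence. -/
def IsIndiscernible {L : FirstOrder.Language.{u, v}} {M : Type (max u v)} [L.Structure M]
    {ι : Type*} [LinearOrder ι] {γ : Type*} (c : ι → γ → M) : Prop :=
  IsIndiscernibleOver (L := L) c ∅

/-- Two families of tuples are mutually indiscernible if each is indiscernible over the union
of the tuples of the other. -/
def MutuallyIndiscernible {L : FirstOrder.Language.{u, v}} {M : Type (max u v)} [L.Structure M]
    {ι : Type*} [LinearOrder ι] {γ δ : Type*} (a : ι → γ → M) (b : ι → δ → M) : Prop :=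
  IsIndiscernibleOver (L := L) a (⋃ i, Set.range (b i)) ∧
    IsIndiscernibleOver (L := L) b (⋃ i, Set.range (a i))

/-- The family of tuples `(c̄ᵢ : i ∈ ι)` is totally indiscernible: any two tuples of distinct
indices (in any order) realize the same formulas. -/
def IsTotallyIndiscernible {L : FirstOrder.Language.{u, v}} {M : Type (max u v)} [L.Structure M]
    {ι : Type*} [LinearOrder ι] {γ : Type*} (c : ι → γ → M) : Prop :=
  ∀ (n : ℕ) (i j : Fin n → ι), Function.Injective i → Function.Injective j →
    ∀ φ : L.Formula (Fin n × γ),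
      φ.Realize (fun v : Fin n × γ => c (i v.1) v.2) ↔
        φ.Realize (fun v : Fin n × γ => c (j v.1) v.2)

/-- A set in a linear order is dense (in the order) and unbounded above and below. -/
def DenseUnbounded {α : Type*} [LinearOrder α] (S : Set α) : Prop :=
  (∀ x y : α, x < y → ∃ z ∈ S, x < z ∧ z < y) ∧ (∀ x : α, ∃ z ∈ S, z < x) ∧
    (∀ x : α, ∃ z ∈ S, x < z)

/-- `R : α → β → Prop` presents (a structure isomorphic to) the random ordered bipartite
graph `G*`, i.e. the Fraïssé limit of finite ordered bipartite graphs: both parts are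
countable nonempty dense linear orders without endpoints and the edge relation is generic. -/
def IsRandomOBG {α β : Type*} [LinearOrder α] [LinearOrder β] (R : α → β → Prop) : Prop :=
  Countable α ∧ Countable β ∧ Nonempty α ∧ Nonempty β ∧
    (∀ F G : Finset β, Disjoint F G →
      DenseUnbounded {x : α | (∀ f ∈ F, R x f) ∧ ∀ g ∈ G, ¬R x g}) ∧
    (∀ F G : Finset α, Disjoint F G →
      DenseUnbounded {y : β | (∀ f ∈ F, R f y) ∧ ∀ g ∈ G, ¬R g y})

/-- An element of the random ordered bipartite graph `G*`, whose two parts `U(G*)` and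
`V(G*)` are both identified with `ℚ`: `Sum.inl` is the `U`-part, `Sum.inr` the `V`-part. -/
abbrev GStarIdx : Type := ℚ ⊕ ℚ

/-- The index of the pair `(s, q)`: in the `U`-part if `s = true`, in the `V`-part
otherwise. -/
def mkIdx {n : ℕ} (s : Fin n → Bool) (q : Fin n → ℚ) : Fin n → GStarIdx := fun k =>
  bif s k then Sum.inl (q k) else Sum.inr (q k)

/-- Two pairs of elements of `G*` (with edge relation `R`) have the same quantifier-free
`L*`-type, where `L* = {U, ≤_U, V, ≤_V, R}`. -/
def SamePairType (R : ℚ → ℚ → Prop) :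
    GStarIdx → GStarIdx → GStarIdx → GStarIdx → Prop
  | Sum.inl p, Sum.inl q, Sum.inl p', Sum.inl q' => (p ≤ q ↔ p' ≤ q') ∧ (q ≤ p ↔ q' ≤ p')
  | Sum.inr p, Sum.inr q, Sum.inr p', Sum.inr q' => (p ≤ q ↔ p' ≤ q') ∧ (q ≤ p ↔ q' ≤ p')
  | Sum.inl p, Sum.inr q, Sum.inl p', Sum.inr q' => R p q ↔ R p' q'
  | Sum.inr q, Sum.inl p, Sum.inr q', Sum.inl p' => R p q ↔ R p' q'
  | _, _, _, _ => False

/-- Two tuples of elements of `G*` (with edge relation `R`) have the same quantifier-free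
`L*`-type. -/
def SameQfType (R : ℚ → ℚ → Prop) {n : ℕ} (i j : Fin n → GStarIdx) : Prop :=
  ∀ k l : Fin n, SamePairType R (i k) (i l) (j k) (j l)

/-- The variables carried by a coordinate of a mixed tuple: a `U`-index carries an `x̄`-tuple
of length `da`, a `V`-index a `ȳ`-tuple of length `db`. -/
def MixVar (da db : ℕ) : Bool → Type
  | true => Fin da
  | false => Fin db

/-- Choose the `a`-tuple or the `b`-tuple according to the side. -/
def pickSide {M : Type*} {da db : ℕ} (a : Fin da → M) (b : Fin db → M) :
    (s : Bool) → MixVar da db s → M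
  | true, w => a w
  | false, w => b w

/-- The family `(āᵢ : i ∈ U(G*) ≅ ℚ) ∪ (b̄ⱼ : j ∈ V(G*) ≅ ℚ)`, indexed by the random ordered
bipartite graph `G*` with edge relation `R`, is `L*`-indiscernible: index tuples with the same
quantifier-free `L*`-type in `G*` realize the same `L`-formulas in `M`. -/
def IsLStarIndiscernible {L : FirstOrder.Language.{u, v}} {M : Type (max u v)} [L.Structure M]
    (R : ℚ → ℚ → Prop) {da db : ℕ} (a : ℚ → Fin da → M) (b : ℚ → Fin db → M) : Prop :=
  ∀ (n : ℕ) (s : Fin n → Bool) (q q' : Fin n → ℚ),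
    SameQfType R (mkIdx s q) (mkIdx s q') →
      ∀ φ : L.Formula ((k : Fin n) × MixVar da db (s k)),
        φ.Realize (fun v => pickSide (a (q v.1)) (b (q v.1)) (s v.1) v.2) ↔
          φ.Realize (fun v => pickSide (a (q' v.1)) (b (q' v.1)) (s v.1) v.2)

/-! ### Iterated ultrafilters -/

theorem aux_ultra_subsingleton {X : Type*} [Subsingleton X] (F G : Ultrafilter X) : F = G := by
  refine Ultrafilter.ext fun s => ?_
  rcases s.eq_empty_or_nonempty with rfl | ⟨x, hx⟩
  · simp
  · have : s = Set.univ := Set.eq_univ_of_forall fun y => Subsingleton.elim x y ▸ hx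
    simp only [this, Filter.univ_mem, ← Ultrafilter.mem_coe]

/-- Iterated power of the ultrafilter `U`. -/
noncomputable def auxE (U : Ultrafilter ℕ) : (n : ℕ) → Ultrafilter (Fin n → ℕ)
  | 0 => pure Fin.elim0
  | n + 1 => U.bind fun i => (auxE U n).map (Fin.cons (α := fun _ => ℕ) i)

theorem auxE_succ (U : Ultrafilter ℕ) (n : ℕ) (S : Set (Fin (n + 1) → ℕ)) :
    S ∈ auxE U (n + 1) ↔ ∀ᶠ i in (U : Filter ℕ), ∀ᶠ g in (auxE U n : Filter (Fin n → ℕ)),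
      Fin.cons (α := fun _ => ℕ) i g ∈ S := Iff.rfl

theorem auxE_map (U : Ultrafilter ℕ) (n : ℕ) : ∀ (m : ℕ) (h : Fin m → Fin n), StrictMono h →
    (auxE U n).map (fun g => g ∘ h) = auxE U m := by
  induction n with
  | zero =>
    intro m h _
    cases m with
    | zero => exact aux_ultra_subsingleton _ _
    | succ m => exact (h 0).elim0
  | succ n ih =>
    intro m h hh
    cases m with
    | zero => exact aux_ultra_subsingleton _ _
    | succ m =>
      by_cases h0 : h 0 = 0
      · have hne : ∀ i : Fin m, h i.succ ≠ 0 := fun i => by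
          have := hh (Fin.succ_pos i)
          rw [h0] at this
          exact this.ne'
        have hm : StrictMono fun i : Fin m => (h i.succ).pred (hne i) := by
          intro i j hij
          simpa using hh (Fin.succ_lt_succ_iff.2 hij)
        refine Ultrafilter.ext fun S => ?_
        rw [Ultrafilter.mem_map, auxE_succ, auxE_succ, ← ih m _ hm]
        have : ∀ (i : ℕ) (g : Fin n → ℕ), (Fin.cons (α := fun _ => ℕ) i g) ∘ h =
            Fin.cons (α := fun _ => ℕ) i (g ∘ fun i : Fin m => (h i.succ).pred (hne i)) := by
          intro i g
          funext t
          refine Fin.cases ?_ (fun t => ?_) t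
          · simp [h0]
          · simp only [Function.comp_apply, Fin.cons_succ]
            conv_lhs => rw [← Fin.succ_pred (h t.succ) (hne t)]
            rw [Fin.cons_succ]
        simp only [Set.mem_preimage, this]
        rfl
      · have hne : ∀ i, h i ≠ 0 := fun i => by
          have h1 := hh.monotone (Fin.zero_le i)
          have h2 := Fin.pos_iff_ne_zero.2 h0
          exact (h2.trans_le h1).ne'
        have hm : StrictMono fun i => (h i).pred (hne i) := by
          intro i j hij
          simpa using hh hij
        refine Ultrafilter.ext fun S => ?_
        rw [Ultrafilter.mem_map, auxE_succ, ← ih _ _ hm]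
        have : ∀ (i : ℕ) (g : Fin n → ℕ), (Fin.cons (α := fun _ => ℕ) i g) ∘ h =
            (g ∘ fun i => (h i).pred (hne i)) := by
          intro i g
          funext t
          simp only [Function.comp_apply]
          conv_lhs => rw [← Fin.succ_pred (h t) (hne t)]
          rw [Fin.cons_succ]
        simp only [Set.mem_preimage, this, Filter.eventually_const]
        rfl

/-- Extend a function on the finite set `D` by zero. -/
noncomputable def auxExt (D : Finset ℚ) (g : Fin D.card → ℕ) (q : ℚ) : ℕ :=
  if hq : q ∈ D then g ((D.orderIsoOfFin rfl).symm ⟨q, hq⟩) else 0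

/-- The limit ultrafilter on functions `ℚ → ℕ`. -/
noncomputable def auxW : Ultrafilter (ℚ → ℕ) :=
  (Ultrafilter.of (Filter.atTop : Filter (Finset ℚ))).bind fun D =>
    (auxE (Filter.hyperfilter ℕ) D.card).map (auxExt D)

theorem auxW_map (m : ℕ) (h : Fin m → ℚ) (hh : StrictMono h) :
    auxW.map (fun f => f ∘ h) = auxE (Filter.hyperfilter ℕ) m := by
  refine Ultrafilter.ext fun S => ?_
  rw [Ultrafilter.mem_map]
  have e1 : (fun f => f ∘ h) ⁻¹' S ∈ auxW ↔
      ∀ᶠ D in (Ultrafilter.of (Filter.atTop : Filter (Finset ℚ)) : Filter (Finset ℚ)),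
        ∀ᶠ g in (auxE (Filter.hyperfilter ℕ) D.card : Filter _), auxExt D g ∘ h ∈ S := Iff.rfl
  rw [e1]
  have e2 : ∀ᶠ D in (Ultrafilter.of (Filter.atTop : Filter (Finset ℚ)) : Filter (Finset ℚ)),
      ((∀ᶠ g in (auxE (Filter.hyperfilter ℕ) D.card : Filter _), auxExt D g ∘ h ∈ S) ↔
        S ∈ auxE (Filter.hyperfilter ℕ) m) := by
    have : ∀ᶠ D in (Filter.atTop : Filter (Finset ℚ)), Finset.univ.image h ⊆ D :=
      Filter.eventually_ge_atTop _
    filter_upwards [Ultrafilter.of_le _ this] with D hD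
    have hmem : ∀ i, h i ∈ D := fun i => hD (Finset.mem_image_of_mem _ (Finset.mem_univ i))
    have hm : StrictMono fun i => (D.orderIsoOfFin rfl).symm ⟨h i, hmem i⟩ := by
      intro i j hij
      simpa using hh hij
    rw [← auxE_map _ _ m _ hm]
    have : ∀ g, auxExt D g ∘ h = g ∘ fun i => (D.orderIsoOfFin rfl).symm ⟨h i, hmem i⟩ := by
      intro g
      funext i
      simp [auxExt, hmem i]
    simp only [this]
    rfl
  rw [Filter.eventually_congr e2, Filter.eventually_const]

theorem auxW_lt (q q' : ℚ) (hq : q < q') : ∀ᶠ f in (auxW : Filter (ℚ → ℕ)), f q < f q' := by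
  have hm : StrictMono ![q, q'] := by
    intro i j hij
    fin_cases i <;> fin_cases j <;> simp_all
  have h1 : {g : Fin 2 → ℕ | g 0 < g 1} ∈ auxE (Filter.hyperfilter ℕ) 2 := by
    rw [auxE_succ]
    refine Filter.Eventually.of_forall fun i => ?_
    change _ ∈ auxE (Filter.hyperfilter ℕ) 1
    rw [auxE_succ]
    have : ∀ᶠ j in (Filter.hyperfilter ℕ : Filter ℕ), i < j :=
      Nat.hyperfilter_le_atTop (Filter.eventually_gt_atTop i)
    filter_upwards [this] with j hj
    exact Filter.Eventually.of_forall fun g => by simpa using hj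
  rw [← auxW_map 2 _ hm] at h1
  exact h1

theorem auxW_indisc {ι : Type*} [Finite ι] (e e' : ι → ℚ)
    (hee : ∀ i j, e i < e j ↔ e' i < e' j) (R : (ι → ℕ) → Prop) :
    (∀ᶠ f in (auxW : Filter (ℚ → ℕ)), R (f ∘ e)) ↔
      (∀ᶠ f in (auxW : Filter (ℚ → ℕ)), R (f ∘ e')) := by
  classical
  have heq : ∀ i j, e i = e j ↔ e' i = e' j := by
    intro i j
    have h1 := hee i j
    have h2 := hee j i
    constructor <;> intro h
    · rw [h] at h1 h2
      exact le_antisymm (not_lt.1 fun h => by simp_all) (not_lt.1 fun h => by simp_all)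
    · rw [h] at h1 h2
      exact le_antisymm (not_lt.1 fun h => by simp_all) (not_lt.1 fun h => by simp_all)
  have := Fintype.ofFinite ι
  let D := Finset.univ.image e
  have hD : ∀ i, e i ∈ D := fun i => Finset.mem_image_of_mem _ (Finset.mem_univ i)
  let π : ι → Fin D.card := fun i => (D.orderIsoOfFin rfl).symm ⟨e i, hD i⟩
  have hπ : ∀ t, ∃ i, π i = t := by
    intro t
    have h1 := (D.orderIsoOfFin rfl t).2
    obtain ⟨i, -, hi⟩ := Finset.mem_image.1 h1
    refine ⟨i, ?_⟩
    simp only [π]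
    rw [OrderIso.symm_apply_eq]
    exact Subtype.ext hi
  choose ρ hρ using hπ
  have hπlt : ∀ i j, π i < π j ↔ e i < e j := by
    intro i j
    simp [π]
  have hπeq : ∀ i j, π i = π j ↔ e i = e j := by
    intro i j
    simp [π]
  have m1 : StrictMono (e ∘ ρ) := by
    intro s t hst
    rw [Function.comp, Function.comp, ← hπlt, hρ, hρ]
    exact hst
  have m2 : StrictMono (e' ∘ ρ) := by
    intro s t hst
    rw [Function.comp, Function.comp, ← hee, ← hπlt, hρ, hρ]
    exact hst
  have f1 : e = (e ∘ ρ) ∘ π := by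
    funext i
    simp only [Function.comp]
    rw [← hπeq, hρ]
  have f2 : e' = (e' ∘ ρ) ∘ π := by
    funext i
    simp only [Function.comp]
    rw [← heq, ← hπeq, hρ]
  have k1 : (∀ᶠ f in (auxW : Filter (ℚ → ℕ)), R (f ∘ e)) ↔
      {g : Fin D.card → ℕ | R (g ∘ π)} ∈ auxE (Filter.hyperfilter ℕ) D.card := by
    rw [← auxW_map _ _ m1]
    conv_lhs => rw [f1]
    rfl
  have k2 : (∀ᶠ f in (auxW : Filter (ℚ → ℕ)), R (f ∘ e')) ↔
      {g : Fin D.card → ℕ | R (g ∘ π)} ∈ auxE (Filter.hyperfilter ℕ) D.card := by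
    rw [← auxW_map _ _ m2]
    conv_lhs => rw [f2]
    rfl
  rw [k1, k2]

/-! ### Ultrapowers -/

theorem aux_ultrapower {L : FirstOrder.Language.{u, v}} {T : L.Theory}
    (N : FirstOrder.Language.Theory.ModelType.{u, v, max u v} T) {I : Type} (W : Ultrafilter I) :
    ∃ (N' : FirstOrder.Language.Theory.ModelType.{u, v, max u v} T) (c : (I → N) → N'),
      ∀ {V : Type} (φ : L.Formula V) (x : V → I → N),
        φ.Realize (fun v => c (x v)) ↔ ∀ᶠ i in (W : Filter I), φ.Realize (fun v => x v i) := by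
  let P := (W : Filter I).Product (fun _ : I => (N : Type (max u v)))
  have hmod : T.Model P := by
    refine ⟨fun φ hφ => ?_⟩
    rw [Ultraproduct.sentence_realize]
    exact Filter.Eventually.of_forall fun _ => T.realize_sentence_of_mem hφ
  have : Nonempty P := Ultraproduct.Product.instNonempty
  refine ⟨⟨P⟩, fun x => (Quotient.mk (Filter.productSetoid (W : Filter I) (fun _ : I => (N : Type (max u v)))) x : P), ?_⟩
  intro V φ x
  exact Ultraproduct.realize_formula_cast φ x

/-- Order property of a formula with parameters inside one model of `T`. -/
def AuxOP {L : FirstOrder.Language.{u, v}} (T : L.Theory) {α γ : Type}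
    (φ : L.Formula ((α ⊕ Fin 1) ⊕ γ)) : Prop :=
  ∃ (N : FirstOrder.Language.Theory.ModelType.{u, v, max u v} T)
    (a : ℕ → α → N) (b : ℕ → Fin 1 → N) (c : γ → N),
    ∀ i j : ℕ, φ.Realize (Sum.elim (Sum.elim (a i) (b j)) c) ↔ i < j

/-- Compactness for the order property. -/
theorem auxOP_of_ladders {L : FirstOrder.Language.{u, v}} {T : L.Theory} {α γ : Type}
    (φ : L.Formula ((α ⊕ Fin 1) ⊕ γ))
    (N : FirstOrder.Language.Theory.ModelType.{u, v, max u v} T) (c : γ → N)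
    (H : ∀ K : ℕ, ∃ X : Fin K → α → N, ∀ l ≤ K, ∃ y : Fin 1 → N, ∀ t : Fin K,
      φ.Realize (Sum.elim (Sum.elim (X t) y) c) ↔ (t : ℕ) < l) : AuxOP T φ := by
  have H' : ∀ K : ℕ, ∃ (X : ℕ → α → N) (Y : ℕ → Fin 1 → N), ∀ i < K, ∀ j < K,
      (φ.Realize (Sum.elim (Sum.elim (X i) (Y j)) c) ↔ i < j) := by
    intro K
    obtain ⟨X, hX⟩ := H K
    have : ∀ l, ∃ y : Fin 1 → N, l ≤ K → ∀ t : Fin K,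
      (φ.Realize (Sum.elim (Sum.elim (X t) y) c) ↔ (t : ℕ) < l) := by
      intro l
      by_cases hl : l ≤ K
      · obtain ⟨y, hy⟩ := hX l hl
        exact ⟨y, fun _ => hy⟩
      · exact ⟨fun _ => Classical.arbitrary _, fun h => absurd h hl⟩
    choose Y hY using this
    refine ⟨fun i => if hi : i < K then X ⟨i, hi⟩ else fun _ => Classical.arbitrary _, Y, ?_⟩
    intro i hi j hj
    simpa [hi] using hY j hj.le ⟨i, hi⟩
  choose X Y hXY using H'
  obtain ⟨N', C, hC⟩ := aux_ultrapower N (Filter.hyperfilter ℕ)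
  refine ⟨N', fun i x => C fun K => X K i x, fun j x => C fun K => Y K j x,
    fun g => C fun _ => c g, ?_⟩
  intro i j
  have h1 := hC φ (Sum.elim (Sum.elim (fun x K => X K i x) (fun x K => Y K j x))
    (fun g _ => c g))
  have e1 : (Sum.elim (Sum.elim (fun x => C fun K => X K i x) (fun x => C fun K => Y K j x))
      (fun g => C fun _ => c g)) = (fun v => C ((Sum.elim (Sum.elim (fun x K => X K i x)
        (fun x K => Y K j x)) (fun g _ => c g)) v)) := by
    funext v
    rcases v with (v | v) | v <;> rfl
  rw [e1, h1]
  have e2 : ∀ᶠ K in (Filter.hyperfilter ℕ : Filter ℕ), max i j < K :=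
    Nat.hyperfilter_le_atTop (Filter.eventually_gt_atTop _)
  rw [← Filter.eventually_const (f := (Filter.hyperfilter ℕ : Filter ℕ)) (p := i < j)]
  apply Filter.eventually_congr
  filter_upwards [e2] with K hK
  rw [← hXY K i (lt_of_le_of_lt (le_max_left _ _) hK) j (lt_of_le_of_lt (le_max_right _ _) hK)]
  have : (fun v => (Sum.elim (Sum.elim (fun x K => X K i x)
        (fun x K => Y K j x)) (fun g _ => c g)) v K) =
      Sum.elim (Sum.elim (X K i) (Y K j)) c := by
    funext v
    rcases v with (v | v) | v <;> rfl
  rw [this]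

/-- Indiscernible sequences witnessing the order property. -/
theorem aux_exists_indisc {L : FirstOrder.Language.{u, v}} {T : L.Theory} {α β : Type}
    (φ : L.Formula (α ⊕ β)) (hφ : FormulaHasOP T φ) :
    ∃ (N : FirstOrder.Language.Theory.ModelType.{u, v, max u v} T)
      (d : ℚ → α ⊕ β → N),
      (∀ p q : ℚ, p < q → φ.Realize (Sum.elim (d p ∘ Sum.inl) (d q ∘ Sum.inr))) ∧
      (∀ p q : ℚ, q < p → ¬ φ.Realize (Sum.elim (d p ∘ Sum.inl) (d q ∘ Sum.inr))) ∧
      ∀ (ι : Type) [Finite ι] (e e' : ι → ℚ), (∀ i j, e i < e j ↔ e' i < e' j) →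
        ∀ ψ : L.Formula (ι × (α ⊕ β)),
          ψ.Realize (fun x => d (e x.1) x.2) ↔ ψ.Realize (fun x => d (e' x.1) x.2) := by
  obtain ⟨N, a, b, hab⟩ := hφ
  obtain ⟨N', C, hC⟩ := aux_ultrapower N auxW
  have key : ∀ p q : ℚ, φ.Realize (Sum.elim
      ((fun x => C fun f => Sum.elim (a (f p)) (b (f p)) x) ∘ Sum.inl)
      ((fun x => C fun f => Sum.elim (a (f q)) (b (f q)) x) ∘ Sum.inr)) ↔
      ∀ᶠ f in (auxW : Filter (ℚ → ℕ)), f p < f q := by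
    intro p q
    have h1 := hC φ (Sum.elim (fun x f => a (f p) x) (fun x f => b (f q) x))
    have e1 : (Sum.elim
      ((fun x => C fun f => Sum.elim (a (f p)) (b (f p)) x) ∘ Sum.inl)
      ((fun x => C fun f => Sum.elim (a (f q)) (b (f q)) x) ∘ Sum.inr)) =
      fun v => C ((Sum.elim (fun x f => a (f p) x) (fun x f => b (f q) x)) v) := by
      funext v
      rcases v with v | v <;> rfl
    rw [e1, h1]
    apply Filter.eventually_congr
    refine Filter.Eventually.of_forall fun f => ?_
    rw [← hab]
    have : (fun v => (Sum.elim (fun x (f : ℚ → ℕ) => a (f p) x) (fun x f => b (f q) x)) v f) =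
      Sum.elim (a (f p)) (b (f q)) := by
      funext v
      rcases v with v | v <;> rfl
    rw [this]
  refine ⟨N', fun q x => C fun f => Sum.elim (a (f q)) (b (f q)) x, ?_, ?_, ?_⟩
  · intro p q hpq
    exact (key p q).2 (auxW_lt p q hpq)
  · intro p q hpq h
    obtain ⟨f, h1, h2⟩ := (((key p q).1 h).and (auxW_lt q p hpq)).exists
    exact lt_asymm h1 h2
  · intro ι _ e e' hee ψ
    rw [hC ψ (fun x f => Sum.elim (a (f (e x.1))) (b (f (e x.1))) x.2),
      hC ψ (fun x f => Sum.elim (a (f (e' x.1))) (b (f (e' x.1))) x.2)]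
    exact auxW_indisc e e' hee
      (fun g => ψ.Realize fun x => Sum.elim (a (g x.1)) (b (g x.1)) x.2)

/-- The key predicate: some formula with parameters among the first `k` coordinates of the
tuple at `0` and finitely many `a`-tuples outside of `[r, s]` distinguishes `r < 0 < s`. -/
def AuxP {L : FirstOrder.Language.{u, v}} {N : Type (max u v)} [L.Structure N] {α : Type}
    (a : ℚ → α → N) (b0 : ℕ → N) (k : ℕ) : Prop :=
  ∃ (ι : Type) (_ : Finite ι) (p : ι → ℚ) (r s : ℚ) (ψ : L.Formula (α ⊕ (Fin k ⊕ ι × α))),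
    r < 0 ∧ 0 < s ∧ (∀ i, p i < r ∨ s < p i) ∧
    ψ.Realize (Sum.elim (a r) (Sum.elim (fun t : Fin k => b0 t) (fun x => a (p x.1) x.2))) ∧
    ¬ ψ.Realize (Sum.elim (a s) (Sum.elim (fun t : Fin k => b0 t) (fun x => a (p x.1) x.2)))

theorem aux_indisc {L : FirstOrder.Language.{u, v}} {N : Type (max u v)} [L.Structure N]
    {α β : Type} (d : ℚ → α ⊕ β → N)
    (hd : ∀ (ι : Type) [Finite ι] (e e' : ι → ℚ), (∀ i j, e i < e j ↔ e' i < e' j) →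
        ∀ ψ : L.Formula (ι × (α ⊕ β)),
          ψ.Realize (fun x => d (e x.1) x.2) ↔ ψ.Realize (fun x => d (e' x.1) x.2))
    {ι : Type} [Finite ι] (p : ι → ℚ) (q q' z : ℚ) {κ : Type} (f : κ → β)
    (ψ : L.Formula (α ⊕ (κ ⊕ ι × α)))
    (h1 : q < z ↔ q' < z) (h2 : z < q ↔ z < q') (h3 : ∀ i, q < p i ↔ q' < p i)
    (h4 : ∀ i, p i < q ↔ p i < q') :
    ψ.Realize (Sum.elim (d q ∘ Sum.inl) (Sum.elim (fun t => d z (Sum.inr (f t)))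
      (fun x => d (p x.1) (Sum.inl x.2)))) ↔
    ψ.Realize (Sum.elim (d q' ∘ Sum.inl) (Sum.elim (fun t => d z (Sum.inr (f t)))
      (fun x => d (p x.1) (Sum.inl x.2)))) := by
  let G : α ⊕ (κ ⊕ ι × α) → Option (Option ι) × (α ⊕ β) :=
    Sum.elim (fun x => (none, Sum.inl x)) (Sum.elim (fun t => (some none, Sum.inr (f t)))
      (fun x => (some (some x.1), Sum.inl x.2)))
  let e : ℚ → Option (Option ι) → ℚ := fun q o =>
    match o with
    | none => q
    | some none => z
    | some (some i) => p i
  have hh : ∀ q, (fun x : Option (Option ι) × (α ⊕ β) => d (e q x.1) x.2) ∘ G =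
      (Sum.elim (d q ∘ Sum.inl) (Sum.elim (fun t => d z (Sum.inr (f t)))
      (fun x => d (p x.1) (Sum.inl x.2)))) := by
    intro q
    funext v
    rcases v with v | v | v <;> rfl
  rw [← hh, ← hh, ← Formula.realize_relabel, ← Formula.realize_relabel]
  apply hd
  rintro (_ | _ | i) (_ | _ | j) <;> simp [e, h1, h2, h3, h4]

theorem aux_step {L : FirstOrder.Language.{u, v}} {T : L.Theory} {α : Type} [Finite α] {n : ℕ}
    (N : FirstOrder.Language.Theory.ModelType.{u, v, max u v} T) (d : ℚ → α ⊕ Fin n → N)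
    (hd : ∀ (ι : Type) [Finite ι] (e e' : ι → ℚ), (∀ i j, e i < e j ↔ e' i < e' j) →
        ∀ ψ : L.Formula (ι × (α ⊕ Fin n)),
          ψ.Realize (fun x => d (e x.1) x.2) ↔ ψ.Realize (fun x => d (e' x.1) x.2))
    (b0 : ℕ → N) (hb0 : ∀ t (h : t < n), b0 t = d 0 (Sum.inr ⟨t, h⟩))
    (k : ℕ) (hk : k + 1 ≤ n) (hP : AuxP (L := L) (fun q => d q ∘ Sum.inl) b0 (k + 1)) :
    AuxP (L := L) (fun q => d q ∘ Sum.inl) b0 k ∨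
      ∃ (m : ℕ) (φ : L.Formula ((α ⊕ Fin 1) ⊕ Fin m)), AuxOP T φ := by
  obtain ⟨ι, _, p, r, s, ψ, hr, hs, hp, hψr, hψs⟩ := hP
  -- truth on the two sides
  have hbfun : (fun t : Fin (k + 1) => b0 t) =
      fun t : Fin (k + 1) => d 0 (Sum.inr (Fin.castLE hk t)) := by
    funext t
    exact hb0 t (by omega)
  have hneg : ∀ q, r ≤ q → q < 0 → ψ.Realize (Sum.elim (d q ∘ Sum.inl)
      (Sum.elim (fun t : Fin (k + 1) => b0 t) (fun x => d (p x.1) (Sum.inl x.2)))) := by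
    intro q hq hq0
    rw [hbfun] at hψr ⊢
    refine (aux_indisc d hd p q r 0 _ ψ ?_ ?_ ?_ ?_).2 hψr
    · exact ⟨fun _ => hr, fun _ => hq0⟩
    · exact ⟨fun h => absurd h hq0.asymm, fun h => absurd h hr.asymm⟩
    · intro i
      rcases hp i with h | h <;> constructor <;> intro <;> linarith
    · intro i
      rcases hp i with h | h <;> constructor <;> intro <;> linarith
  have hpos : ∀ q, q ≤ s → 0 < q → ¬ ψ.Realize (Sum.elim (d q ∘ Sum.inl)
      (Sum.elim (fun t : Fin (k + 1) => b0 t) (fun x => d (p x.1) (Sum.inl x.2)))) := by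
    intro q hq hq0 hh
    apply hψs
    rw [hbfun] at hh ⊢
    refine (aux_indisc d hd p q s 0 _ ψ ?_ ?_ ?_ ?_).1 hh
    · exact ⟨fun h => absurd h hq0.asymm, fun h => absurd h hs.asymm⟩
    · exact ⟨fun _ => hs, fun _ => hq0⟩
    · intro i
      rcases hp i with h | h <;> constructor <;> intro <;> linarith
    · intro i
      rcases hp i with h | h <;> constructor <;> intro <;> linarith
  let Q : (α → N) → N → Prop := fun X y => ψ.Realize (Sum.elim X
      (Sum.elim (fun t : Fin (k + 1) => Fin.lastCases (motive := fun _ => (N : Type _)) y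
        (fun j : Fin k => b0 j) t)
        (fun x => d (p x.1) (Sum.inl x.2))))
  have hQ : ∀ X, Q X (b0 k) ↔ ψ.Realize (Sum.elim X
      (Sum.elim (fun t : Fin (k + 1) => b0 t) (fun x => d (p x.1) (Sum.inl x.2)))) := by
    intro X
    have : (fun t : Fin (k + 1) => Fin.lastCases (motive := fun _ => (N : Type _)) (b0 k)
        (fun j : Fin k => b0 j) t) = fun t : Fin (k + 1) => b0 t := by
      funext t
      refine Fin.lastCases ?_ (fun j => ?_) t <;> simp
    simp only [Q]
    rw [this]
  by_cases hA : ∀ K : ℕ, ∃ X : Fin K → α → N, ∀ l ≤ K, ∃ y : N, ∀ t : Fin K,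
      Q (X t) y ↔ (t : ℕ) < l
  · right
    obtain ⟨m, ⟨ε⟩⟩ := Finite.exists_equiv_fin (Fin k ⊕ ι × α)
    let G : α ⊕ (Fin (k + 1) ⊕ ι × α) → (α ⊕ Fin 1) ⊕ Fin m :=
      Sum.elim (fun x => Sum.inl (Sum.inl x))
        (Sum.elim (fun t => Fin.lastCases (motive := fun _ => (α ⊕ Fin 1) ⊕ Fin m)
          (Sum.inl (Sum.inr 0)) (fun j : Fin k => Sum.inr (ε (Sum.inl j))) t)
          (fun x => Sum.inr (ε (Sum.inr x))))
    refine ⟨m, ψ.relabel G, ?_⟩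
    let c : Fin m → N := (Sum.elim (fun t : Fin k => b0 t)
      (fun x : ι × α => d (p x.1) (Sum.inl x.2))) ∘ ε.symm
    refine auxOP_of_ladders _ N c ?_
    intro K
    obtain ⟨X, hX⟩ := hA K
    refine ⟨X, fun l hl => ?_⟩
    obtain ⟨y, hy⟩ := hX l hl
    refine ⟨fun _ => y, fun t => ?_⟩
    rw [← hy t, Formula.realize_relabel]
    have : (Sum.elim (Sum.elim (X t) fun _ => y) c) ∘ G = Sum.elim (X t)
      (Sum.elim (fun t : Fin (k + 1) => Fin.lastCases (motive := fun _ => (N : Type _)) y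
        (fun j : Fin k => b0 j) t)
        (fun x => d (p x.1) (Sum.inl x.2))) := by
      funext w
      rcases w with w | w | w
      · rfl
      · refine Fin.lastCases ?_ (fun j => ?_) w <;> simp [G, c]
      · simp [G, c]
    rw [this]
  · left
    push Not at hA
    obtain ⟨K, hK⟩ := hA
    let ng : ℕ → ℚ := fun t => r / (t + 1)
    let ps : ℕ → ℚ := fun t => s * ((t + 1) / (K + 1))
    have hng0 : ∀ t, ng t < 0 := fun t => div_neg_of_neg_of_pos hr (by positivity)
    have hngm : ∀ t t', t < t' → ng t < ng t' := by
      intro t t' h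
      have h' : (t : ℚ) < t' := by exact_mod_cast h
      simp only [ng]
      rw [div_lt_div_iff₀ (by positivity) (by positivity)]
      nlinarith
    have hngr : ∀ t, r ≤ ng t := by
      intro t
      simp only [ng]
      rw [le_div_iff₀ (by positivity)]
      have : (0 : ℚ) ≤ t := by positivity
      nlinarith
    have hps0 : ∀ t, 0 < ps t := fun t => by simp only [ps]; positivity
    have hpsm : ∀ t t', t < t' → ps t < ps t' := by
      intro t t' h
      have h' : (t : ℚ) < t' := by exact_mod_cast h
      simp only [ps]
      gcongr
    have hpss : ∀ t, t < K → ps t < s := by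
      intro t h
      have h' : (t : ℚ) < K := by exact_mod_cast h
      have : ((t : ℚ) + 1) / (K + 1) < 1 := by
        rw [div_lt_one (by positivity)]
        linarith
      simp only [ps]
      nlinarith
    let J : ℕ → ℕ → ℚ := fun c t => if t < c then ng t else ps t
    obtain ⟨l, hl, hl'⟩ := hK fun t => d (J 0 t) ∘ Sum.inl
    let Θ : ℕ → Prop := fun c => ∃ y : N, ∀ t : Fin K, Q (d (J c t) ∘ Sum.inl) y ↔ (t : ℕ) < l
    have hΘ0 : ¬ Θ 0 := by
      rintro ⟨y, hy⟩
      obtain ⟨t, ht⟩ := hl' y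
      have := hy t
      rw [← not_lt] at ht
      tauto
    have hΘl : Θ l := by
      refine ⟨b0 k, fun t => ?_⟩
      rw [hQ]
      by_cases htl : (t : ℕ) < l
      · simp only [J, htl, if_true, iff_true]
        exact hneg _ (hngr _) (hng0 _)
      · simp only [J, htl, if_false, iff_false]
        exact hpos _ (hpss _ t.2).le (hps0 _)
    obtain ⟨t0, ht0l, hΘt, hΘt1⟩ : ∃ t0 < l, ¬ Θ t0 ∧ Θ (t0 + 1) := by
      by_contra! hcon
      have : ∀ c, c ≤ l → ¬ Θ c := by
        intro c
        induction c with
        | zero => exact fun _ => hΘ0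
        | succ c ih => exact fun hc => hcon c (by omega) (ih (by omega))
      exact this l le_rfl hΘl
    -- the new formula
    classical
    let G : Fin K → α ⊕ (Fin (k + 1) ⊕ ι × α) →
        (α ⊕ (Fin k ⊕ (ι ⊕ Fin K) × α)) ⊕ Fin 1 := fun t =>
      Sum.elim (fun x => if (t : ℕ) = t0 then Sum.inl (Sum.inl x)
          else Sum.inl (Sum.inr (Sum.inr (Sum.inr t, x))))
        (Sum.elim (fun t => Fin.lastCases
            (motive := fun _ => (α ⊕ (Fin k ⊕ (ι ⊕ Fin K) × α)) ⊕ Fin 1)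
          (Sum.inr 0) (fun j : Fin k => Sum.inl (Sum.inr (Sum.inl j))) t)
          (fun x => Sum.inl (Sum.inr (Sum.inr (Sum.inl x.1, x.2)))))
    let χ : L.Formula (α ⊕ (Fin k ⊕ (ι ⊕ Fin K) × α)) :=
      Formula.iExs (Fin 1) (Formula.iInf fun t : Fin K =>
        if (t : ℕ) < l then ψ.relabel (G t) else (ψ.relabel (G t)).not)
    let p' : ι ⊕ Fin K → ℚ :=
      Sum.elim p (fun t => if (t : ℕ) = t0 then s + 1 else J t0 t)
    have hχ : ∀ q, χ.Realize (Sum.elim (d q ∘ Sum.inl) (Sum.elim (fun t : Fin k => b0 t)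
        (fun x => d (p' x.1) (Sum.inl x.2)))) ↔
        ∃ y : N, ∀ t : Fin K, Q (d (if (t : ℕ) = t0 then q else J t0 t) ∘ Sum.inl) y ↔
          (t : ℕ) < l := by
      intro q
      have hG : ∀ (t : Fin K) (y : Fin 1 → N),
          (Sum.elim (Sum.elim (d q ∘ Sum.inl) (Sum.elim (fun t : Fin k => b0 t)
            (fun x => d (p' x.1) (Sum.inl x.2)))) y) ∘ G t =
          Sum.elim (d (if (t : ℕ) = t0 then q else J t0 t) ∘ Sum.inl)
            (Sum.elim (fun t : Fin (k + 1) => Fin.lastCases (motive := fun _ => (N : Type _)) (y 0)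
              (fun j : Fin k => b0 j) t) (fun x => d (p x.1) (Sum.inl x.2))) := by
        intro t y
        funext w
        rcases w with w | w | w
        · by_cases h : (t : ℕ) = t0 <;> simp [G, p', h]
        · refine Fin.lastCases ?_ (fun j => ?_) w <;> simp [G]
        · simp [G, p']
      have hreal : ∀ (t : Fin K) (y : Fin 1 → N),
          (if (t : ℕ) < l then ψ.relabel (G t) else (ψ.relabel (G t)).not).Realize
            (Sum.elim (Sum.elim (d q ∘ Sum.inl) (Sum.elim (fun t : Fin k => b0 t)
            (fun x => d (p' x.1) (Sum.inl x.2)))) y) ↔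
          (Q (d (if (t : ℕ) = t0 then q else J t0 t) ∘ Sum.inl) (y 0) ↔ (t : ℕ) < l) := by
        intro t y
        by_cases htl : (t : ℕ) < l
        · rw [if_pos htl, Formula.realize_relabel, hG]
          simp only [htl, iff_true, Q]
        · rw [if_neg htl, Formula.realize_not, Formula.realize_relabel, hG]
          simp only [htl, iff_false, Q]
      simp only [χ, Formula.realize_iExs, Formula.realize_iInf]
      constructor
      · rintro ⟨y, hy⟩
        exact ⟨y 0, fun t => (hreal t y).1 (hy t)⟩
      · rintro ⟨y, hy⟩
        exact ⟨fun _ => y, fun t => (hreal t _).2 (hy t)⟩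
    refine ⟨ι ⊕ Fin K, inferInstance, p', ng t0, ps t0, χ, hng0 _, hps0 _, ?_, ?_, ?_⟩
    · rintro (i | t)
      · rcases hp i with h | h
        · left
          exact h.trans_le (hngr _)
        · right
          exact (hpss t0 (by omega)).trans h
      · by_cases h : (t : ℕ) = t0
        · right
          have := hpss t0 (by omega)
          simp only [p', Sum.elim_inr, h, if_true]
          linarith
        · simp only [p', Sum.elim_inr, h, if_false, J]
          by_cases h2 : (t : ℕ) < t0
          · left
            rw [if_pos h2]
            exact hngm _ _ h2
          · right
            rw [if_neg h2]
            exact hpsm _ _ (by omega)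
    · refine (hχ _).2 ?_
      obtain ⟨y, hy⟩ := hΘt1
      refine ⟨y, fun t => ?_⟩
      rw [← hy t]
      have : (if (t : ℕ) = t0 then ng t0 else J t0 t) = J (t0 + 1) t := by
        simp only [J]
        split_ifs <;> first | omega | simp_all
      rw [this]
    · intro hh
      apply hΘt
      obtain ⟨y, hy⟩ := (hχ _).1 hh
      refine ⟨y, fun t => ?_⟩
      rw [← hy t]
      have : (if (t : ℕ) = t0 then ps t0 else J t0 t) = J t0 t := by
        simp only [J]
        split_ifs <;> first | omega | simp_all
      rw [this]

theorem aux_reduce {L : FirstOrder.Language.{u, v}} {T : L.Theory} {α : Type} [Finite α] {n : ℕ}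
    (φ : L.Formula (α ⊕ Fin n)) (hφ : FormulaHasOP T φ) :
    ∃ (m : ℕ) (φ' : L.Formula ((α ⊕ Fin 1) ⊕ Fin m)), AuxOP T φ' := by
  obtain ⟨N, d, hlt, hgt, hd⟩ := aux_exists_indisc φ hφ
  let b0 : ℕ → N := fun t => if h : t < n then d 0 (Sum.inr ⟨t, h⟩) else Classical.arbitrary _
  have hb0 : ∀ t (h : t < n), b0 t = d 0 (Sum.inr ⟨t, h⟩) := by
    intro t h
    simp [b0, h]
  have hPn : AuxP (L := L) (fun q => d q ∘ Sum.inl) b0 n := by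
    refine ⟨Empty, inferInstance, Empty.elim, -1, 1, φ.relabel (Sum.map id Sum.inl),
      by norm_num, by norm_num, fun i => i.elim, ?_, ?_⟩
    · rw [Formula.realize_relabel]
      convert hlt (-1) 0 (by norm_num) using 1
      funext w
      rcases w with w | w <;> simp [hb0]
    · rw [Formula.realize_relabel]
      convert hgt 1 0 (by norm_num) using 2
      funext w
      rcases w with w | w <;> simp [hb0]
  by_contra hcon
  have hall : ∀ j, j ≤ n → AuxP (L := L) (fun q => d q ∘ Sum.inl) b0 (n - j) := by
    intro j
    induction j with
    | zero => exact fun _ => hPn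
    | succ j ih =>
      intro hj
      have h1 := ih (by omega)
      have h2 : n - j = (n - (j + 1)) + 1 := by omega
      rw [h2] at h1
      exact (aux_step N d hd b0 hb0 _ (by omega) h1).resolve_right hcon
  have h0 := hall n le_rfl
  rw [Nat.sub_self] at h0
  obtain ⟨ι, _, p, r, s, ψ, hr, hs, hp, hψr, hψs⟩ := h0
  apply hψs
  have hb : (fun t : Fin 0 => b0 t) = fun t : Fin 0 => d (s + 1) (Sum.inr t.elim0) := by
    funext t
    exact t.elim0
  rw [hb] at hψr ⊢
  refine (aux_indisc d hd p r s (s + 1) (fun t : Fin 0 => t.elim0) ψ ?_ ?_ ?_ ?_).1 hψr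
  · constructor <;> intro <;> linarith
  · constructor <;> intro <;> linarith
  · intro i
    rcases hp i with h | h <;> constructor <;> intro <;> linarith
  · intro i
    rcases hp i with h | h <;> constructor <;> intro <;> linarith

/-- If, in every model `M` of the complete theory `T`, every formula `φ(x; y)` in
two single variables with parameters from `M` does not have the order property, then `T` is
stable: no parameter-free formula `φ(x̄; ȳ)` has the order property. -/
theorem stable_of_two_single_variables_with_params {L : FirstOrder.Language.{u, v}}
    (T : L.Theory) (hT : T.IsComplete)
    (h : ∀ (M : Type (max u v)) [L.Structure M] [Nonempty M], M ⊨ T →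
      ∀ (k : ℕ) (φ : L.Formula ((Fin 1 ⊕ Fin 1) ⊕ Fin k)) (c : Fin k → M),
        ¬ HasOPWithParams φ c) :
    ∀ (m n : ℕ) (φ : L.Formula (Fin m ⊕ Fin n)), ¬ FormulaHasOP T φ := by
  intro m n φ hφ
  obtain ⟨k, φ', N, a, b, c, habc⟩ := aux_reduce φ hφ
  -- swap the roles of the variables
  let G : (Fin m ⊕ Fin 1) ⊕ Fin k → Fin 1 ⊕ Fin (m + k) :=
    Sum.elim (Sum.elim (fun x => Sum.inr (Fin.castAdd k x)) Sum.inl)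
      (fun x => Sum.inr (Fin.natAdd m x))
  have hOP : FormulaHasOP T (φ'.relabel G).not := by
    refine ⟨N, fun i => b (i + 1), fun j => Fin.append (a j) c, fun i j => ?_⟩
    rw [Formula.realize_not, Formula.realize_relabel]
    have : (Sum.elim (b (i + 1)) (Fin.append (a j) c)) ∘ G =
        Sum.elim (Sum.elim (a j) (b (i + 1))) c := by
      funext w
      rcases w with (w | w) | w <;> simp [G]
    rw [this, habc]
    omega
  obtain ⟨k', φ'', N', a', b', c', h'⟩ := aux_reduce _ hOP
  refine h N' inferInstance k' φ'' c' ⟨⟨N', ElementaryEmbedding.refl L N'⟩, a', b', ?_⟩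
  exact h'
end

section
/- Let T be a complete first-order theory in a language L. Assume that for every model M of T, every formula φ(x;y) with parameters from M, where x and y are single variables, is NIP (does not have the independence property). Then T is NIP, i.e., no L-formula φ(x̄;ȳ) (in any finite tuples of variables, without parameters) has the independence property. -/
open FirstOrder FirstOrder.Language

universe u v

/-- Finite hypergraph Ramsey theorem for subsets of `ℕ`. -/
theorem ramsey_finset (C : Type) [Finite C] (k : ℕ) : ∀ n : ℕ, ∃ N : ℕ, ∀ χ : Finset ℕ → C,
    ∀ A : Finset ℕ, N ≤ A.card → ∃ B ⊆ A, B.card = n ∧ ∃ c, ∀ s ⊆ B, s.card = k → χ s = c := by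
  classical
  induction k with
  | zero =>
    intro n
    refine ⟨n, fun χ A hA => ?_⟩
    obtain ⟨B, hBA, hB⟩ := Finset.exists_subset_card_eq hA
    refine ⟨B, hBA, hB, χ ∅, fun s _ hs => ?_⟩
    rw [Finset.card_eq_zero.1 hs]
  | succ k ih =>
    -- pre-homogeneous sets
    have pre : ∀ n : ℕ, ∃ N : ℕ, ∀ χ : Finset ℕ → C, ∀ A : Finset ℕ, N ≤ A.card →
        ∃ B ⊆ A, B.card = n ∧ ∃ c : ℕ → C, ∀ x ∈ B, ∀ s ⊆ B, s.card = k → (∀ y ∈ s, x < y) →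
          χ (insert x s) = c x := by
      intro n
      induction n with
      | zero =>
        refine ⟨0, fun χ A _ => ⟨∅, Finset.empty_subset _, rfl, fun _ => χ ∅, ?_⟩⟩
        simp
      | succ n ihn =>
        obtain ⟨N1, hN1⟩ := ihn
        obtain ⟨N2, hN2⟩ := ih N1
        refine ⟨N2 + 1, fun χ A hA => ?_⟩
        have hne : A.Nonempty := Finset.card_pos.1 (by omega)
        have hmem := A.min'_mem hne
        have hlt : ∀ y ∈ A.erase (A.min' hne), A.min' hne < y := fun y hy =>
          lt_of_le_of_ne (A.min'_le y (Finset.mem_of_mem_erase hy))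
            (Finset.ne_of_mem_erase hy).symm
        generalize A.min' hne = x at hmem hlt
        obtain ⟨A', hA', hA'c, c0, hc0⟩ := hN2 (fun s => χ (insert x s)) (A.erase x)
          (by rw [Finset.card_erase_of_mem hmem]; omega)
        obtain ⟨B, hBA', hBc, c, hc⟩ := hN1 χ A' hA'c.ge
        have hxB : x ∉ B := fun hx => lt_irrefl x (hlt x (hA' (hBA' hx)))
        refine ⟨insert x B, ?_, by rw [Finset.card_insert_of_notMem hxB, hBc],
          Function.update c x c0, ?_⟩
        · intro y hy
          rcases Finset.mem_insert.1 hy with rfl | hy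
          · exact hmem
          · exact Finset.mem_of_mem_erase (hA' (hBA' hy))
        · intro y hy s hs hsk hys
          have hsB : s ⊆ B := by
            intro z hz
            rcases Finset.mem_insert.1 (hs hz) with rfl | hzB
            · exfalso
              rcases Finset.mem_insert.1 hy with rfl | hyB
              · exact lt_irrefl _ (hys _ hz)
              · exact lt_asymm (hys _ hz) (hlt y (hA' (hBA' hyB)))
            · exact hzB
          rcases Finset.mem_insert.1 hy with rfl | hyB
          · rw [Function.update_self]
            exact hc0 s (hsB.trans hBA') hsk
          · rw [Function.update_of_ne (by rintro rfl; exact hxB hyB)]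
            exact hc y hyB s hsB hsk hys
    intro n
    cases nonempty_fintype C
    obtain ⟨N, hN⟩ := pre (Fintype.card C * n)
    refine ⟨N, fun χ A hA => ?_⟩
    obtain ⟨B, hBA, hBc, c, hc⟩ := hN χ A hA
    obtain ⟨c0, -, hc0⟩ := Finset.exists_le_card_fiber_of_mul_le_card_of_maps_to
      (s := B) (t := Finset.univ) (f := c) (n := n) (fun _ _ => Finset.mem_univ _)
      ⟨χ ∅, Finset.mem_univ _⟩ (by rw [hBc, Finset.card_univ])
    obtain ⟨B', hB', hB'c⟩ := Finset.exists_subset_card_eq hc0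
    have hB'B : B' ⊆ B := hB'.trans (Finset.filter_subset _ _)
    refine ⟨B', hB'B.trans hBA, hB'c, c0, fun s hs hsk => ?_⟩
    have hne : s.Nonempty := Finset.card_pos.1 (by omega)
    have hm := s.min'_mem hne
    have h1 := hc (s.min' hne) (hB'B (hs hm)) (s.erase (s.min' hne))
      (((Finset.erase_subset _ _).trans hs).trans hB'B)
      (by rw [Finset.card_erase_of_mem hm]; omega)
      (fun y hy => lt_of_le_of_ne (s.min'_le y (Finset.mem_of_mem_erase hy))
            (Finset.ne_of_mem_erase hy).symm)
    rw [Finset.insert_erase hm] at h1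
    rw [h1]
    exact (Finset.mem_filter.1 (hB' (hs hm))).2

/-- Finite Ramsey theorem for strictly increasing tuples. -/
theorem ramsey_seq (C : Type) [Finite C] (k n : ℕ) : ∃ N : ℕ, ∀ χ : (Fin k → Fin N) → C,
    ∃ g : Fin n → Fin N, StrictMono g ∧ ∀ i j : Fin k → Fin n, StrictMono i → StrictMono j →
      χ (g ∘ i) = χ (g ∘ j) := by
  classical
  obtain ⟨N, hN⟩ := ramsey_finset (Option C) k n
  refine ⟨N, fun χ => ?_⟩
  obtain ⟨B, hBA, hBc, c, hc⟩ := hN (fun s => if h : s.card = k ∧ ∀ x ∈ s, x < N then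
    some (χ fun t => ⟨s.orderEmbOfFin h.1 t, h.2 _ (s.orderEmbOfFin_mem h.1 t)⟩) else none)
    (Finset.range N) (by simp)
  have hlt : ∀ x ∈ B, x < N := fun x hx => Finset.mem_range.1 (hBA hx)
  let g : Fin n → Fin N := fun t => ⟨B.orderEmbOfFin hBc t, hlt _ (B.orderEmbOfFin_mem hBc t)⟩
  have hg : StrictMono g := fun a b hab => (B.orderEmbOfFin hBc).strictMono hab
  have key : ∀ i : Fin k → Fin n, StrictMono i → some (χ (g ∘ i)) = c := by
    intro i hi
    have hmono : StrictMono (fun t => (g (i t) : ℕ)) := fun a b hab => hg (hi hab)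
    have hcard : (Finset.univ.image (fun t => (g (i t) : ℕ))).card = k := by
      rw [Finset.card_image_of_injective _ hmono.injective]; simp
    have hmem : ∀ x ∈ Finset.univ.image (fun t => (g (i t) : ℕ)), x < N := by
      intro x hx
      obtain ⟨t, -, rfl⟩ := Finset.mem_image.1 hx
      exact (g (i t)).2
    have h1 := hc (Finset.univ.image (fun t => (g (i t) : ℕ))) (by
      intro x hx
      obtain ⟨t, -, rfl⟩ := Finset.mem_image.1 hx
      exact B.orderEmbOfFin_mem hBc _) hcard
    rw [dif_pos ⟨hcard, hmem⟩] at h1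
    rw [← h1]
    congr 2
    funext t
    apply Fin.ext
    have := Finset.orderEmbOfFin_unique hcard (f := fun t => (g (i t) : ℕ))
      (fun t => Finset.mem_image_of_mem _ (Finset.mem_univ _)) hmono
    exact congrFun this t
  refine ⟨g, hg, fun i j hi hj => ?_⟩
  exact Option.some_injective _ ((key i hi).trans (key j hj).symm)

/-- `R` shatters a set of `K` points on the right. -/
def Shatters {A B : Type*} (R : A → B → Prop) (K : ℕ) : Prop :=
  ∃ b : Fin K → B, ∀ S : Fin K → Bool, ∃ a : A, ∀ t, R a (b t) ↔ S t = true

theorem Shatters.comp {A B : Type*} {R : A → B → Prop} {K K' : ℕ} {b : Fin K → B}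
    (h : ∀ S : Fin K → Bool, ∃ a : A, ∀ t, R a (b t) ↔ S t = true)
    (g : Fin K' → Fin K) (hg : Function.Injective g) :
    ∀ S : Fin K' → Bool, ∃ a : A, ∀ t, R a (b (g t)) ↔ S t = true := by
  intro S
  obtain ⟨a, ha⟩ := h (Function.extend g S fun _ => true)
  refine ⟨a, fun t => ?_⟩
  rw [ha, hg.extend_apply]

theorem Shatters.mono {A B : Type*} {R : A → B → Prop} {K K' : ℕ} (h : Shatters R K)
    (hK : K' ≤ K) : Shatters R K' := by
  obtain ⟨b, hb⟩ := h
  exact ⟨_, Shatters.comp hb (Fin.castLE hK) (Fin.castLE_injective hK)⟩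

theorem Shatters.dual {A B : Type*} {R : A → B → Prop} {K : ℕ} (h : Shatters R (2 ^ K)) :
    Shatters (fun b a => R a b) K := by
  obtain ⟨b, hb⟩ := h
  let e : (Fin K → Bool) ≃ Fin (2 ^ K) := Fintype.equivFinOfCardEq (by simp)
  choose a ha using fun t : Fin K => hb (fun p => e.symm p t)
  refine ⟨a, fun S => ⟨b (e S), fun t => ?_⟩⟩
  show R (a t) (b (e S)) ↔ _
  rw [ha]; simp

/-- A function on the cube which does not change when flipping single coordinates is constant. -/
theorem cube_const {N : ℕ} (P : (Fin N → Bool) → Prop)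
    (h : ∀ η l, P (Function.update η l true) ↔ P (Function.update η l false)) (η η' : Fin N → Bool) :
    P η ↔ P η' := by
  classical
  have step : ∀ η l e, P η ↔ P (Function.update η l e) := by
    intro η l e
    have h0 := h η l
    have h1 : P η ↔ P (Function.update η l (η l)) := by rw [Function.update_eq_self]
    rw [h1]
    cases η l <;> cases e <;> simp_all
  have : ∀ s : Finset (Fin N), P η ↔ P (s.piecewise η' η) := by
    intro s
    induction s using Finset.induction_on with
    | empty => simp
    | insert a s _ ih => rw [ih, Finset.piecewise_insert]; exact step _ _ _
  simpa using this Finset.univ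

theorem exists_bool_iff (P : Bool → Prop) (h : ¬ (P true ↔ P false)) (x : Bool) :
    ∃ e, P e ↔ x = true := by
  by_contra hcon
  push Not at hcon
  have h1 := hcon true
  have h2 := hcon false
  cases x <;> simp_all

/-- The combinatorial core. -/
theorem core (N K : ℕ) (hK : 0 < K) : ∃ n0 : ℕ, ∀ {A A' Y : Type*} (R : A → A' → Y → Prop)
    (Φ : (Fin N → Bool) → A → (Fin N → Y) → Prop)
    (_ : ∀ f a b, Φ f a b ↔ ∃ a', ∀ t, R a a' (b t) ↔ f t = true)
    (_ : ∀ a b, ∃ f, ¬ Φ f a b)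
    (_ : ∀ f l (d : Fin N → Y) (y : Fin K → Y), ∃ ε : Fin K → Bool,
      ¬ ∃ a, ∀ u, Φ f a (Function.update d l (y u)) ↔ ε u = true),
    ¬ Shatters (fun (p : A × A') y => R p.1 p.2 y) n0 := by
  classical
  obtain ⟨n2, hn2⟩ := ramsey_seq (Set ((Fin N → Bool) × (Fin N → Bool))) N (N * K)
  obtain ⟨n0, hn0⟩ := ramsey_seq (Set ((Fin N → Bool) × Fin N × (Fin K → Bool))) (N * K) (n2 * 2)
  refine ⟨n0, ?_⟩
  intro A A' Y R Φ hΦ H1 H2 hsh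
  obtain ⟨b, hb⟩ := hsh
  let z : Fin K := ⟨0, hK⟩
  -- the formula expressing that `a` follows the pattern `ε`
  let Ψ : (Fin N → Bool) → Fin N → (Fin K → Bool) → (Fin (N * K) → Y) → Prop := fun f l ε w =>
    ∃ a, ∀ u, Φ f a (Function.update (fun t => w (finProdFinEquiv (t, z))) l
      (w (finProdFinEquiv (l, u)))) ↔ ε u = true
  obtain ⟨g, hg, hghom⟩ := hn0 (fun i => {x | Ψ x.1 x.2.1 x.2.2 (b ∘ i)})
  have hb1 := Shatters.comp hb g hg.injective
  obtain ⟨⟨a, a'⟩, haa⟩ := hb1 (fun p => decide (((finProdFinEquiv.symm p).2 : ℕ) = 1))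
  let bit : Bool → Fin 2 := fun e => if e then 1 else 0
  let B : Fin n2 → Bool → Y := fun p e => b (g (finProdFinEquiv (p, bit e)))
  have hRB : ∀ p e, R a a' (B p e) ↔ e = true := by
    intro p e
    have := haa (finProdFinEquiv (p, bit e))
    simp only [Equiv.symm_apply_apply] at this
    simp only [B]
    rw [this]
    cases e <;> simp [bit]
  obtain ⟨j, hj, hjhom⟩ := hn2 (fun i => {x | Φ x.1 a (fun t => B (i t) (x.2 t))})
  have hom2 : ∀ (f η : Fin N → Bool) (i i' : Fin N → Fin (N * K)), StrictMono i → StrictMono i' →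
      (Φ f a (fun t => B (j (i t)) (η t)) ↔ Φ f a (fun t => B (j (i' t)) (η t))) := by
    intro f η i i' hi hi'
    have := Set.ext_iff.1 (hjhom i i' hi hi') (f, η)
    simpa using this
  have hom1 : ∀ f l ε (e e' : Fin (N * K) → Bool),
      Ψ f l ε (fun p => B (j p) (e p)) → Ψ f l ε (fun p => B (j p) (e' p)) := by
    intro f l ε e e' h
    have hmono : ∀ e : Fin (N * K) → Bool,
        StrictMono (fun p => (finProdFinEquiv (j p, bit (e p)) : Fin (n2 * 2))) := by
      intro e p q hpq
      have h1 := hj hpq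
      have h2 := (bit (e p)).2
      rw [Fin.lt_def] at h1 ⊢
      simp only [finProdFinEquiv_apply_val]
      omega
    have := Set.ext_iff.1 (hghom _ _ (hmono e) (hmono e')) (f, l, ε)
    exact this.1 h
  -- strictly increasing transversal
  have hmonoJ : ∀ (l : Fin N) (u : Fin K),
      StrictMono (fun t : Fin N => (finProdFinEquiv (t, if t = l then u else z) : Fin (N * K))) := by
    intro l u p q hpq
    have h2 := (if p = l then u else z).2
    rw [Fin.lt_def] at hpq ⊢
    simp only [finProdFinEquiv_apply_val]
    have : K * (p : ℕ) + K ≤ K * (q : ℕ) := by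
      have := Nat.mul_le_mul_left K (Nat.succ_le_of_lt hpq)
      rw [Nat.mul_succ] at this
      exact this
    omega
  let i0 : Fin N → Fin (N * K) := fun t => finProdFinEquiv (t, z)
  have hi0 : StrictMono i0 := by
    intro p q hpq
    rw [Fin.lt_def] at hpq ⊢
    simp only [i0, finProdFinEquiv_apply_val]
    have := Nat.mul_lt_mul_of_pos_left hpq hK
    omega
  have indep : ∀ (f η : Fin N → Bool) (l : Fin N), (Φ f a (fun t => B (j (i0 t)) (Function.update η l true t)) ↔
      Φ f a (fun t => B (j (i0 t)) (Function.update η l false t))) := by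
    intro f η l
    by_contra hne
    -- the value realizing a given truth value
    have hval : ∀ x : Bool, ∃ e : Bool,
        (Φ f a (fun t => B (j (i0 t)) (Function.update η l e t)) ↔ x = true) := by
      exact exists_bool_iff (fun e => Φ f a (fun t => B (j (i0 t)) (Function.update η l e t))) hne
    choose v hv using hval
    obtain ⟨ε, hε⟩ := H2 f l (fun t => B (j (finProdFinEquiv (t, z))) false)
      (fun u => B (j (finProdFinEquiv (l, u))) false)
    apply hε
    refine hom1 f l ε (fun p => if (finProdFinEquiv.symm p).1 = l then
      v (ε (finProdFinEquiv.symm p).2) else η (finProdFinEquiv.symm p).1) (fun _ => false) ?_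
    refine ⟨a, fun u => ?_⟩
    rw [← hv (ε u), ← hom2 f _ _ _ (hmonoJ l u) hi0]
    apply iff_of_eq
    congr 1
    funext t
    by_cases ht : t = l
    · subst ht; simp
    · simp [ht]
  obtain ⟨f, hf⟩ := H1 a (fun t => B (j (i0 t)) true)
  apply hf
  rw [cube_const (fun η => Φ f a (fun t => B (j (i0 t)) (η t))) (indep f) (fun _ => true) f]
  rw [hΦ]
  exact ⟨a', fun t => hRB _ _⟩

section Bounded

variable {L : FirstOrder.Language.{u, v}} {M : Type (max u v)} [L.Structure M]

/-- All definable relations between `α`-tuples and `β`-tuples, with parameters, have bounded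
VC-dimension in `M`, uniformly in the parameters. -/
def AllBounded (L : FirstOrder.Language.{u, v}) (M : Type (max u v)) [L.Structure M]
    (α β : Type) : Prop :=
  ∀ (γ : Type) [Finite γ] (s : Set ((α ⊕ β) ⊕ γ → M)), (∅ : Set M).Definable L s →
    ∃ K : ℕ, ∀ c : γ → M,
      ¬ Shatters (fun (a : α → M) (b : β → M) => Sum.elim (Sum.elim a b) c ∈ s) K

theorem AllBounded.swap {α β : Type} (h : AllBounded L M α β) : AllBounded L M β α := by
  intro γ _ s hs
  obtain ⟨K, hK⟩ := h γ _ (hs.preimage_comp (Sum.map Sum.swap id))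
  refine ⟨2 ^ K, fun c hc => hK c ?_⟩
  have := hc.dual
  convert this using 3
  rw [Set.mem_preimage]
  apply iff_of_eq
  congr 1
  funext x
  rcases x with (x | x) | x <;> rfl

theorem AllBounded.equiv {α α' β : Type} (h : AllBounded L M α β) (e : α' ≃ α) :
    AllBounded L M α' β := by
  intro γ _ s hs
  obtain ⟨K, hK⟩ := h γ _ (hs.preimage_comp (Sum.map (Sum.map e id) id))
  refine ⟨K, fun c hc => hK c ?_⟩
  obtain ⟨b, hb⟩ := hc
  refine ⟨b, fun S => ?_⟩
  obtain ⟨a, ha⟩ := hb S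
  refine ⟨a ∘ e.symm, fun t => ?_⟩
  rw [← ha t]
  simp only [Set.mem_preimage]
  apply iff_of_eq
  congr 1
  funext x
  rcases x with (x | x) | x <;> simp

theorem AllBounded.empty {α β : Type} [IsEmpty α] : AllBounded L M α β := by
  intro γ _ s hs
  refine ⟨1, fun c hc => ?_⟩
  obtain ⟨b, hb⟩ := hc
  obtain ⟨a, ha⟩ := hb (fun _ => true)
  obtain ⟨a', ha'⟩ := hb (fun _ => false)
  have h1 := ha 0
  have h2 := ha' 0
  rw [Subsingleton.elim a' a] at h2
  simp_all

theorem definable_iff_bool {α : Type} {s : Set (α → M)} (hs : (∅ : Set M).Definable L s)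
    (e : Bool) : (∅ : Set M).Definable L {w | w ∈ s ↔ e = true} := by
  cases e
  · convert hs.compl using 1
    ext w; simp
  · convert hs using 1
    ext w; simp

theorem AllBounded.sum {α α' β : Type} [Finite α'] [Finite β] (h : AllBounded L M α β)
    (h' : AllBounded L M α' β) [Finite α] : AllBounded L M (α ⊕ α') β := by
  classical
  intro γ _ s hs
  obtain ⟨N, hN⟩ := h' (α ⊕ γ) _ (hs.preimage_comp
    (Sum.elim (Sum.elim (Sum.elim (fun x => Sum.inr (Sum.inl x)) (fun x => Sum.inl (Sum.inl x)))
      (fun x => Sum.inl (Sum.inr x))) (fun x => Sum.inr (Sum.inr x))))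
  -- the relation of `(a; y; d, c)`
  let idx : Fin N → Fin N → ((α ⊕ α') ⊕ β) ⊕ γ → ((α ⊕ β) ⊕ ((Fin N × β) ⊕ γ)) ⊕ α' := fun l t =>
    Sum.elim (Sum.elim (Sum.elim (fun x => Sum.inl (Sum.inl (Sum.inl x))) Sum.inr)
      (fun x => if t = l then Sum.inl (Sum.inl (Sum.inr x)) else
        Sum.inl (Sum.inr (Sum.inl (t, x))))) (fun x => Sum.inl (Sum.inr (Sum.inr x)))
  let D : (Fin N → Bool) → Fin N → Set ((α ⊕ β) ⊕ ((Fin N × β) ⊕ γ) → M) := fun f l =>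
    {w | ∃ a' : α' → M, Sum.elim w a' ∈ ⋂ t : Fin N,
      {w' | w' ∈ (fun g => g ∘ idx l t) ⁻¹' s ↔ f t = true}}
  have hD : ∀ f l, (∅ : Set M).Definable L (D f l) := by
    intro f l
    apply Set.Definable.exists_of_finite
    apply Set.definable_iInter_of_finite
    intro t
    exact definable_iff_bool (hs.preimage_comp (idx l t)) (f t)
  choose K0 hK0 using fun f l => h _ (D f l) (hD f l)
  cases nonempty_fintype (Fin N → Bool)
  let K : ℕ := (Finset.univ.sup fun p : (Fin N → Bool) × Fin N => K0 p.1 p.2) + 1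
  obtain ⟨n0, hn0⟩ := core N K (Nat.succ_pos _)
  refine ⟨n0, fun c hc => ?_⟩
  refine hn0 (A := α → M) (A' := α' → M) (Y := β → M)
    (fun a a' y => Sum.elim (Sum.elim (Sum.elim a a') y) c ∈ s)
    (fun f a b => ∃ a', ∀ t, Sum.elim (Sum.elim (Sum.elim a a') (b t)) c ∈ s ↔ f t = true)
    (fun _ _ _ => Iff.rfl) ?_ ?_ ?_
  · intro a b
    by_contra hcon
    push Not at hcon
    refine hN (Sum.elim a c) ⟨b, fun f => ?_⟩
    obtain ⟨a', ha'⟩ := hcon f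
    refine ⟨a', fun t => ?_⟩
    rw [← ha' t]
    simp only [Set.mem_preimage]
    apply iff_of_eq
    congr 1
    funext x
    rcases x with ((x | x) | x) | x <;> rfl
  · intro f l d y
    by_contra hcon
    push Not at hcon
    refine hK0 f l (Sum.elim (fun p => d p.1 p.2) c) (Shatters.mono (K := K) ⟨y, fun ε => ?_⟩ ?_)
    · obtain ⟨a, ha⟩ := hcon ε
      refine ⟨a, fun u => ?_⟩
      rw [← ha u]
      simp only [D, Set.mem_iInter, Set.mem_ofPred_eq, Set.mem_preimage]
      refine exists_congr fun a' => forall_congr' fun t => ?_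
      apply iff_of_eq
      congr 2
      funext x
      rcases x with ((x | x) | x) | x
      · rfl
      · rfl
      · by_cases ht : t = l
        · subst ht; simp [idx]
        · simp [idx, ht]
      · rfl
    · exact (Finset.le_sup (f := fun p : (Fin N → Bool) × Fin N => K0 p.1 p.2)
        (Finset.mem_univ (f, l))).trans (Nat.le_succ _)
  · obtain ⟨b, hb⟩ := hc
    refine ⟨b, fun S => ?_⟩
    obtain ⟨a, ha⟩ := hb S
    refine ⟨(a ∘ Sum.inl, a ∘ Sum.inr), fun t => ?_⟩
    rw [← ha t]
    simp

theorem AllBounded.fin {β : Type} [Finite β] (h : AllBounded L M (Fin 1) β) (m : ℕ) :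
    AllBounded L M (Fin m) β := by
  induction m with
  | zero => exact AllBounded.empty
  | succ m ih => exact (AllBounded.sum ih h).equiv finSumFinEquiv.symm

end Bounded

/-- The ultrapower argument: the hypothesis of the theorem gives uniform bounds. -/
theorem allBounded_one_one {L : FirstOrder.Language.{u, v}}
    (T : L.Theory)
    (h : ∀ (M : Type (max u v)) [L.Structure M] [Nonempty M], M ⊨ T →
      ∀ (k : ℕ) (φ : L.Formula ((Fin 1 ⊕ Fin 1) ⊕ Fin k)) (c : Fin k → M),
        ¬ HasIPWithParams φ c)
    (M : Type (max u v)) [L.Structure M] [Nonempty M] (hM : M ⊨ T) :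
    AllBounded L M (Fin 1) (Fin 1) := by
  classical
  intro γ _ s hs
  obtain ⟨k, ⟨e⟩⟩ := Finite.exists_equiv_fin γ
  obtain ⟨φ, hφ⟩ := Set.empty_definable_iff.1 (hs.preimage_comp (Sum.map id e))
  have hφ' : ∀ a b c, φ.Realize (Sum.elim (Sum.elim a b) c) ↔
      Sum.elim (Sum.elim a b) (c ∘ e) ∈ s := by
    intro a b c
    have : Sum.elim (Sum.elim a b) (c ∘ e) = Sum.elim (Sum.elim a b) c ∘ (Sum.map id e) := by
      funext x
      rcases x with x | x <;> rfl
    rw [this]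
    exact (Set.ext_iff.1 hφ (Sum.elim (Sum.elim a b) c)).symm
  by_contra hcon
  push Not at hcon
  have hcon' : ∀ K, ∃ (c : γ → M) (a : Fin K → Fin 1 → M) (b : (Fin K → Bool) → Fin 1 → M),
      ∀ t S, Sum.elim (Sum.elim (a t) (b S)) c ∈ s ↔ S t = true := by
    intro K
    obtain ⟨c, hc⟩ := hcon (2 ^ K)
    obtain ⟨a, ha⟩ := hc.dual
    choose b hb using ha
    exact ⟨c, a, b, fun t S => hb S t⟩
  choose c a b hab using hcon'
  let U : Ultrafilter ℕ := Filter.hyperfilter ℕ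
  let N : Type (max u v) := (U : Filter ℕ).Product (fun _ => M)
  have hN : N ⊨ T := by
    refine ⟨fun ψ hψ => ?_⟩
    rw [Ultraproduct.sentence_realize]
    exact Filter.Eventually.of_forall fun _ => hM.realize_of_mem ψ hψ
  let m0 : M := Classical.arbitrary M
  let q : (ℕ → M) → N := fun x => (x : (U : Filter ℕ).Product (fun _ => M))
  let cc : Fin k → ℕ → M := fun x K => c K (e.symm x)
  let aa : ℕ → Fin 1 → ℕ → M := fun i x K => if hi : i < K then a K ⟨i, hi⟩ x else m0
  let bb : Set ℕ → Fin 1 → ℕ → M := fun S x K => b K (fun t => decide ((t : ℕ) ∈ S)) x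
  refine h N hN k φ (fun x => q (cc x))
    ⟨⟨N, ElementaryEmbedding.refl L N⟩, fun i x => q (aa i x), fun S x => q (bb S x), ?_⟩
  intro i S
  have key := Ultraproduct.realize_formula_cast (u := U) (M := fun _ => M) φ
    (Sum.elim (Sum.elim (aa i) (bb S)) cc)
  have e1 : (fun x => q (Sum.elim (Sum.elim (aa i) (bb S)) cc x)) =
      Sum.elim (Sum.elim (fun x => q (aa i x)) (fun x => q (bb S x)))
        ((ElementaryEmbedding.refl L N) ∘ fun x => q (cc x)) := by
    funext x
    rcases x with (x | x) | x <;> rfl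
  have key2 : φ.Realize (fun x => q (Sum.elim (Sum.elim (aa i) (bb S)) cc x)) ↔
    ∀ᶠ K in (U : Filter ℕ), φ.Realize fun x => Sum.elim (Sum.elim (aa i) (bb S)) cc x K := key
  rw [e1] at key2
  refine key2.trans ?_
  have ev : ∀ᶠ K in (U : Filter ℕ),
      ((φ.Realize fun x => Sum.elim (Sum.elim (aa i) (bb S)) cc x K) ↔ i ∈ S) := by
    have hgt : ∀ᶠ K in (U : Filter ℕ), i < K := by
      apply Filter.hyperfilter_le_cofinite
      rw [Nat.cofinite_eq_atTop]
      exact Filter.eventually_gt_atTop i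
    filter_upwards [hgt] with K hK
    have e2 : (fun x => Sum.elim (Sum.elim (aa i) (bb S)) cc x K) =
        Sum.elim (Sum.elim (a K ⟨i, hK⟩) (b K (fun t => decide ((t : ℕ) ∈ S))))
          (c K ∘ e.symm) := by
      funext x
      rcases x with (x | x) | x
      · simp [aa, hK]
      · rfl
      · rfl
    rw [e2, hφ']
    have e3 : (c K ∘ e.symm) ∘ e = c K := by funext x; simp
    rw [e3, hab]
    simp
  rw [Filter.eventually_congr ev]
  simp

/-- If, in every model `M` of the complete theory `T`, every formula `φ(x; y)` in
two single variables with parameters from `M` is NIP, then `T` is NIP: no parameter-free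
formula `φ(x̄; ȳ)` has the independence property. -/
theorem nip_of_two_single_variables_with_params {L : FirstOrder.Language.{u, v}}
    (T : L.Theory) (hT : T.IsComplete)
    (h : ∀ (M : Type (max u v)) [L.Structure M] [Nonempty M], M ⊨ T →
      ∀ (k : ℕ) (φ : L.Formula ((Fin 1 ⊕ Fin 1) ⊕ Fin k)) (c : Fin k → M),
        ¬ HasIPWithParams φ c) :
    ∀ (m n : ℕ) (φ : L.Formula (Fin m ⊕ Fin n)), ¬ FormulaHasIP T φ := by
  intro m n φ hIP
  obtain ⟨N, a, b, hab⟩ := hIP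
  have h11 : AllBounded L N (Fin 1) (Fin 1) := allBounded_one_one T h N N.is_model
  have hmn : AllBounded L N (Fin m) (Fin n) := (h11.fin n).swap.fin m
  obtain ⟨K, hK⟩ := hmn.swap (Fin 0) {w | φ.Realize (fun x => w (Sum.inl (Sum.swap x)))}
    (Set.empty_definable_iff.2 ⟨φ.relabel (fun x => Sum.inl (Sum.swap x)), by
      ext w; simp [Formula.realize_relabel, Function.comp_def]⟩)
  refine hK Fin.elim0 ⟨fun t => a t, fun S =>
    ⟨b {i | ∃ hi : i < K, S ⟨i, hi⟩ = true}, fun t => ?_⟩⟩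
  have h1 := hab t {i | ∃ hi : i < K, S ⟨i, hi⟩ = true}
  have h2 : (t : ℕ) ∈ {i | ∃ hi : i < K, S ⟨i, hi⟩ = true} ↔ S t = true := by simp
  rw [← h2, ← h1]
  simp only [Set.mem_ofPred_eq]
  apply iff_of_eq
  congr 1
  funext x
  rcases x with x | x <;> rfl
end

section
/- Let T be a complete first-order theory and let φ(x̄;ȳ) be a formula without parameters that has the order property, where the tuple ȳ has length at least 2. Then there exist a model M of T and a formula ψ(x̄;ȳ') with parameters from M such that |ȳ'| < |ȳ| and ψ(x̄;ȳ') has the order property. -/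
open FirstOrder FirstOrder.Language

universe u v

namespace OPRed

open Filter

section Comb

variable {X Z : Type*} (χ : X → Z → Prop)

/-- `D` is split by a full binary tree of height `h` with nodes in `P`. -/
def Sh : ℕ → Set X → Set Z → Prop
  | 0, _, D => D.Nonempty
  | h + 1, P, D => ∃ x ∈ P, Sh h P {z | z ∈ D ∧ χ x z} ∧ Sh h P {z | z ∈ D ∧ ¬ χ x z}

theorem Sh.mono {h : ℕ} : ∀ {P P' : Set X} {D D' : Set Z}, P ⊆ P' → D ⊆ D' →
    Sh χ h P D → Sh χ h P' D' := by
  induction h with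
  | zero => intro P P' D D' _ hD H; exact Set.Nonempty.mono hD H
  | succ h ih =>
    rintro P P' D D' hP hD ⟨x, hx, h1, h2⟩
    exact ⟨x, hP hx, ih hP (fun z hz => ⟨hD hz.1, hz.2⟩) h1,
      ih hP (fun z hz => ⟨hD hz.1, hz.2⟩) h2⟩

theorem Sh.nonempty {h : ℕ} : ∀ {P : Set X} {D : Set Z}, Sh χ h P D → D.Nonempty := by
  induction h with
  | zero => intro P D H; exact H
  | succ h ih =>
    rintro P D ⟨x, hx, h1, h2⟩
    exact (ih h1).mono fun z hz => hz.1

theorem Sh.ramsey (N : ℕ) : ∀ (h k : ℕ), h + k = N → ∀ (P Q : Set X) (D : Set Z),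
    Sh χ N (P ∪ Q) D → Sh χ h P D ∨ Sh χ k Q D := by
  induction N with
  | zero =>
    intro h k hk P Q D H
    obtain rfl : h = 0 := by omega
    exact Or.inl H
  | succ N ih =>
    intro h k hk P Q D H
    rcases h with _ | h
    · exact Or.inl (Sh.nonempty χ H)
    rcases k with _ | k
    · exact Or.inr (Sh.nonempty χ H)
    obtain ⟨x, hx, h1, h2⟩ := H
    rcases hx with hx | hx
    · rcases ih h (k+1) (by omega) P Q _ h1 with a1 | a1
      · rcases ih h (k+1) (by omega) P Q _ h2 with a2 | a2
        · exact Or.inl ⟨x, hx, a1, a2⟩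
        · exact Or.inr (Sh.mono χ subset_rfl (fun z hz => hz.1) a2)
      · exact Or.inr (Sh.mono χ subset_rfl (fun z hz => hz.1) a1)
    · rcases ih (h+1) k (by omega) P Q _ h1 with a1 | a1
      · exact Or.inl (Sh.mono χ subset_rfl (fun z hz => hz.1) a1)
      · rcases ih (h+1) k (by omega) P Q _ h2 with a2 | a2
        · exact Or.inl (Sh.mono χ subset_rfl (fun z hz => hz.1) a2)
        · exact Or.inr ⟨x, hx, a1, a2⟩

/-- A ladder of length `k` inside `P × D`. -/
def Lad (χ : X → Z → Prop) (k : ℕ) (P : Set X) (D : Set Z) : Prop :=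
  ∃ (x : ℕ → X) (z : ℕ → Z), (∀ i < k, x i ∈ P ∧ z i ∈ D) ∧
    ∀ i < k, ∀ j < k, (χ (x i) (z j) ↔ i < j)

theorem Lad.cons {χ : X → Z → Prop} {k : ℕ} {P P' : Set X} {D D' : Set Z}
    (H : Lad χ k P' D') (hP : P' ⊆ P) (hD : D' ⊆ D) {x : X} {z : Z} (hx : x ∈ P') (hz : z ∈ D)
    (h1 : ∀ x' ∈ P', ¬ χ x' z) (h2 : ∀ z' ∈ D', χ x z') : Lad χ (k + 1) P D := by
  obtain ⟨xs, zs, hm, hl⟩ := H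
  refine ⟨fun i => Nat.casesOn i x xs, fun i => Nat.casesOn i z zs, ?_, ?_⟩
  · rintro (_ | i) hi
    · exact ⟨hP hx, hz⟩
    · exact ⟨hP (hm i (by omega)).1, hD (hm i (by omega)).2⟩
  · rintro (_ | i) hi (_ | j) hj
    · simpa using h1 x hx
    · simpa using h2 _ (hm j (by omega)).2
    · simpa using h1 _ (hm i (by omega)).1
    · simpa using hl i (by omega) j (by omega)

theorem Lad.mono {χ : X → Z → Prop} {k : ℕ} {P P' : Set X} {D D' : Set Z}
    (H : Lad χ k P' D') (hP : P' ⊆ P) (hD : D' ⊆ D) : Lad χ k P D := by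
  obtain ⟨xs, zs, hm, hl⟩ := H
  exact ⟨xs, zs, fun i hi => ⟨hP (hm i hi).1, hD (hm i hi).2⟩, hl⟩

/-- Heights of trees that guarantee ladders. -/
def ht : ℕ → ℕ
  | 0 => 0
  | N + 1 => (ht N + 1) + (ht N + 1)

theorem lad_of_sh [Nonempty X] [Nonempty Z] (N : ℕ) : ∀ (p q : ℕ), p + q = N →
    ∀ (P : Set X) (D : Set Z),
    Sh χ (ht N) P D → Lad χ p P D ∨ Lad (fun x z => ¬ χ x z) q P D := by
  have x0 : X := Classical.arbitrary X
  have z0 : Z := Classical.arbitrary Z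
  induction N with
  | zero =>
    intro p q hpq P D _
    obtain rfl : p = 0 := by omega
    exact Or.inl ⟨fun _ => x0, fun _ => z0, by simp, by simp⟩
  | succ N ih =>
    intro p q hpq P D H
    rcases p with _ | p
    · exact Or.inl ⟨fun _ => x0, fun _ => z0, by simp, by simp⟩
    rcases q with _ | q
    · exact Or.inr ⟨fun _ => x0, fun _ => z0, by simp, by simp⟩
    obtain ⟨z, hz⟩ := Sh.nonempty χ H
    have hU : P ⊆ {x | x ∈ P ∧ χ x z} ∪ {x | x ∈ P ∧ ¬ χ x z} := by
      intro x hx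
      by_cases h : χ x z
      · exact Or.inl ⟨hx, h⟩
      · exact Or.inr ⟨hx, h⟩
    rcases Sh.ramsey χ _ _ _ rfl _ _ _ (Sh.mono χ hU subset_rfl H) with h | h
    · obtain ⟨x, hx, _, h2⟩ := h
      rcases ih (p+1) q (by omega) _ _ h2 with a | a
      · exact Or.inl (a.mono (fun x hx => hx.1) (fun z hz => hz.1))
      · exact Or.inr (a.cons (fun x hx => hx.1) (fun z hz => hz.1) hx hz
          (fun x' hx' => not_not.2 hx'.2) (fun z' hz' => hz'.2))
    · obtain ⟨x, hx, h1, _⟩ := h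
      rcases ih p (q+1) (by omega) _ _ h1 with a | a
      · exact Or.inl (a.cons (fun x hx => hx.1) (fun z hz => hz.1) hx hz
          (fun x' hx' => hx'.2) (fun z' hz' => hz'.2))
      · exact Or.inr (a.mono (fun x hx => hx.1) (fun z hz => hz.1))

/-- The set of solutions of a finite partial type. -/
def Dp {I : Type*} (a : I → X) (p : List (I × Bool)) : Set Z :=
  {z | ∀ t ∈ p, (χ (a t.1) z ↔ t.2 = true)}

/-- Definability of types. -/
theorem definability {I : Type*} (a : I → X) (d : Z) (h0 : ℕ)
    (hh : ¬ Sh χ h0 Set.univ Set.univ) :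
    ∃ (R : ℕ) (p : List (I × Bool)), ∀ i : I,
      χ (a i) d ↔ Sh χ R Set.univ {z | z ∈ Dp χ a p ∧ χ (a i) z} := by
  classical
  let good : List (I × Bool) → Prop := fun p => d ∈ Dp χ a p
  have hex : ∃ R, ∃ p, good p ∧ ¬ Sh χ R Set.univ (Dp χ a p) := by
    refine ⟨h0, [], by simp [good, Dp], fun H => hh (Sh.mono χ subset_rfl (Set.subset_univ _) H)⟩
  obtain ⟨p, hp, hR⟩ := Nat.find_spec hex
  have hmin : ∀ m < Nat.find hex, ∀ p, good p → Sh χ m Set.univ (Dp χ a p) := by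
    intro m hm p hp
    by_contra hc
    exact Nat.find_min hex hm ⟨p, hp, hc⟩
  generalize Nat.find hex = R at *
  rcases R with _ | R
  · exact absurd ⟨d, hp⟩ hR
  refine ⟨R, p, fun i => ?_⟩
  have pos : χ (a i) d → Sh χ R Set.univ {z | z ∈ Dp χ a p ∧ χ (a i) z} := by
    intro h
    refine Sh.mono χ subset_rfl ?_ (hmin R (by omega) ((i, true) :: p) ?_)
    · intro z hz
      simp only [Dp, List.forall_mem_cons, Set.mem_ofPred_eq] at hz ⊢
      exact ⟨hz.2, by simpa using hz.1⟩
    · simp only [good, Dp, List.forall_mem_cons, Set.mem_ofPred_eq] at hp ⊢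
      exact ⟨by simpa using h, hp⟩
  have neg : ¬ χ (a i) d → Sh χ R Set.univ {z | z ∈ Dp χ a p ∧ ¬ χ (a i) z} := by
    intro h
    refine Sh.mono χ subset_rfl ?_ (hmin R (by omega) ((i, false) :: p) ?_)
    · intro z hz
      simp only [Dp, List.forall_mem_cons, Set.mem_ofPred_eq] at hz ⊢
      exact ⟨hz.2, by simpa using hz.1⟩
    · simp only [good, Dp, List.forall_mem_cons, Set.mem_ofPred_eq] at hp ⊢
      exact ⟨by simpa using h, hp⟩
  refine ⟨pos, fun h => ?_⟩
  by_contra hc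
  exact hR ⟨a i, Set.mem_univ _, h, neg hc⟩

end Comb

section Model

variable {L : FirstOrder.Language.{u, v}}

/-- The formula relation with first `y`-coordinate separated. -/
def rel {N : Type*} [L.Structure N] {m n : ℕ} (φ : L.Formula (Fin m ⊕ Fin (n + 1)))
    (c : Fin n → N) (x : Fin m → N) (z : N) : Prop :=
  φ.Realize (Sum.elim x (Fin.cons z c : Fin (n + 1) → N))

/-- `Sh` is definable. -/
theorem sh_def {N : Type*} [L.Structure N] {m n : ℕ} (φ : L.Formula (Fin m ⊕ Fin (n + 1)))
    (h : ℕ) : ∀ {γ : Type} (ι : Fin n → γ) (δ : L.Formula (γ ⊕ Fin 1)),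
    ∃ θ : L.Formula γ, ∀ v : γ → N, θ.Realize v ↔
      Sh (rel φ (v ∘ ι)) h Set.univ {z | δ.Realize (Sum.elim v (fun _ => z))} := by
  induction h with
  | zero =>
    intro γ ι δ
    refine ⟨δ.iExs (Fin 1), fun v => ?_⟩
    rw [Formula.realize_iExs]
    constructor
    · rintro ⟨i, hi⟩
      refine ⟨i 0, ?_⟩
      have : (fun _ => i 0) = i := by
        funext k; rw [Subsingleton.elim k 0]
      simpa [this] using hi
    · rintro ⟨z, hz⟩
      exact ⟨_, hz⟩
  | succ h ih =>
    intro γ ι δ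
    let δ' : L.Formula ((γ ⊕ Fin m) ⊕ Fin 1) := δ.relabel (Sum.map Sum.inl id)
    let φ' : L.Formula ((γ ⊕ Fin m) ⊕ Fin 1) := φ.relabel
      (Sum.elim (fun i => Sum.inl (Sum.inr i))
        (Fin.cons (Sum.inr 0) (fun i => Sum.inl (Sum.inl (ι i))) :
          Fin (n + 1) → (γ ⊕ Fin m) ⊕ Fin 1))
    have hδ' : ∀ (v : γ → N) (x : Fin m → N) (z : N),
        δ'.Realize (Sum.elim (Sum.elim v x) (fun _ => z)) ↔
          δ.Realize (Sum.elim v (fun _ => z)) := by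
      intro v x z
      rw [Formula.realize_relabel]
      have : (Sum.elim (Sum.elim v x) (fun _ : Fin 1 => z)) ∘ (Sum.map Sum.inl id)
        = Sum.elim v (fun _ => z) := by
        funext k; rcases k with k | k <;> rfl
      rw [this]
    have hφ' : ∀ (v : γ → N) (x : Fin m → N) (z : N),
        φ'.Realize (Sum.elim (Sum.elim v x) (fun _ => z)) ↔ rel φ (v ∘ ι) x z := by
      intro v x z
      rw [Formula.realize_relabel, rel]
      have : (Sum.elim (Sum.elim v x) (fun _ : Fin 1 => z)) ∘
          (Sum.elim (fun i => Sum.inl (Sum.inr i))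
          (Fin.cons (Sum.inr 0) (fun i => Sum.inl (Sum.inl (ι i))) :
          Fin (n + 1) → (γ ⊕ Fin m) ⊕ Fin 1))
        = Sum.elim x (Fin.cons z (v ∘ ι) : Fin (n + 1) → N) := by
        funext k
        rcases k with k | k
        · rfl
        · refine Fin.cases ?_ (fun k => ?_) k <;> simp
      rw [this]
    obtain ⟨θ1, h1⟩ := ih (fun i => (Sum.inl (ι i) : γ ⊕ Fin m)) (δ' ⊓ φ')
    obtain ⟨θ2, h2⟩ := ih (fun i => (Sum.inl (ι i) : γ ⊕ Fin m)) (δ' ⊓ φ'.not)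
    refine ⟨(θ1 ⊓ θ2).iExs (Fin m), fun v => ?_⟩
    rw [Formula.realize_iExs]
    have hc : ∀ x : Fin m → N, (Sum.elim v x ∘ fun i => (Sum.inl (ι i) : γ ⊕ Fin m)) = v ∘ ι :=
      fun x => rfl
    simp only [Formula.realize_inf, h1, h2, Formula.realize_not, hδ', hφ', hc, Sh, Set.mem_univ,
      true_and, Set.mem_ofPred_eq]

/-- The ultrapower of `N` over `ℕ`. -/
abbrev UP (N : Type*) : Type _ := ((hyperfilter ℕ : Ultrafilter ℕ) : Filter ℕ).Product (fun _ => N)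

/-- The class of a sequence. -/
noncomputable def cl {N : Type*} (f : ℕ → N) : UP N := (f : UP N)

theorem realize_cl {N : Type*} [L.Structure N] [Nonempty N] {β : Type*} (φ : L.Formula β)
    (x : β → ℕ → N) : φ.Realize (fun i => cl (x i)) ↔
      ∀ᶠ k in (hyperfilter ℕ : Filter ℕ), φ.Realize (fun i => x i k) :=
  Ultraproduct.realize_formula_cast φ x

theorem up_model {N : Type*} [L.Structure N] [Nonempty N] (T : L.Theory) [T.Model N] :
    T.Model (UP N) := by
  refine ⟨fun φ hφ => ?_⟩
  rw [Ultraproduct.sentence_realize]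
  exact Filter.Eventually.of_forall fun _ => Theory.realize_sentence_of_mem T hφ

theorem ev_ge (k : ℕ) {p : ℕ → Prop} (h : ∀ n ≥ k, p n) :
    ∀ᶠ n in (hyperfilter ℕ : Filter ℕ), p n := by
  have : ∀ᶠ n in (atTop : Filter ℕ), p n := eventually_atTop.2 ⟨k, h⟩
  rw [← Nat.cofinite_eq_atTop] at this
  exact hyperfilter_le_cofinite this

theorem ev_iff (k : ℕ) {p : ℕ → Prop} {q : Prop} (h : ∀ n ≥ k, (p n ↔ q)) :
    (∀ᶠ n in (hyperfilter ℕ : Filter ℕ), p n) ↔ q := by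
  by_cases hq : q
  · exact iff_of_true (ev_ge k fun n hn => (h n hn).2 hq) hq
  · refine iff_of_false (fun H => ?_) hq
    have h2 := H.and (ev_ge k fun n hn => mt (h n hn).1 hq)
    obtain ⟨n, hn⟩ := h2.exists
    exact hn.2 hn.1

/-- Arbitrarily long ladders give the order property with parameters. -/
theorem op_of_lad (T : L.Theory) (N : Type (max u v)) [L.Structure N] [Nonempty N] [T.Model N]
    {m n : ℕ} (φ : L.Formula (Fin m ⊕ Fin (n + 1)))
    (H : ∀ k, ∃ c : Fin n → N, Lad (rel φ c) k Set.univ Set.univ) :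
    ∃ (M : FirstOrder.Language.Theory.ModelType.{u, v, max u v} T)
      (ψ : L.Formula ((Fin m ⊕ Fin 1) ⊕ Fin n)) (c : Fin n → M), HasOPWithParams ψ c := by
  choose c x z hm hl using H
  have := up_model (N := N) T
  refine ⟨Theory.ModelType.of T (UP N), φ.relabel (Sum.elim (fun i => Sum.inl (Sum.inl i))
    (Fin.cons (Sum.inl (Sum.inr 0)) (fun i => Sum.inr i) :
      Fin (n + 1) → (Fin m ⊕ Fin 1) ⊕ Fin n)),
    fun t => cl fun k => c k t, ⟨UP N, ElementaryEmbedding.refl L _⟩,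
    fun i t => cl fun k => x k i t, fun j _ => cl fun k => z k j, fun i j => ?_⟩
  rw [Formula.realize_relabel]
  have e : (Sum.elim (Sum.elim (fun t => cl fun k => x k i t) (fun _ : Fin 1 => cl fun k => z k j))
      ((ElementaryEmbedding.refl L (UP N)) ∘ fun t => cl fun k => c k t)) ∘
      (Sum.elim (fun i => Sum.inl (Sum.inl i))
      (Fin.cons (Sum.inl (Sum.inr 0)) (fun i => Sum.inr i) :
        Fin (n + 1) → (Fin m ⊕ Fin 1) ⊕ Fin n)) =
      fun s => cl (fun k => Sum.elim (x k i) (Fin.cons (z k j) (c k) : Fin (n + 1) → N) s) := by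
    funext s
    rcases s with s | s
    · rfl
    · refine Fin.cases ?_ (fun s => ?_) s <;> simp
  refine Iff.trans (iff_of_eq (congrArg φ.Realize e)) ?_
  refine Iff.trans (realize_cl _ _) ?_
  exact ev_iff (max i j + 1) fun k hk => hl k i (by omega) j (by omega)

/-- An order-property sequence stretched along the reals. -/
theorem stretch (T : L.Theory) {m n : ℕ} (φ : L.Formula (Fin m ⊕ Fin n))
    (hφ : FormulaHasOP T φ) :
    ∃ (M : FirstOrder.Language.Theory.ModelType.{u, v, max u v} T)
      (a : ℝ → Fin m → M) (b : ℝ → Fin n → M),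
      ∀ q r : ℝ, φ.Realize (Sum.elim (a q) (b r)) ↔ q < r := by
  obtain ⟨N, a, b, hab⟩ := hφ
  have := up_model (N := N) T
  refine ⟨Theory.ModelType.of T (UP N), fun q t => cl fun k => a ⌊Real.exp q * k⌋₊ t,
    fun q t => cl fun k => b ⌊Real.exp q * k⌋₊ t, fun q r => ?_⟩
  have e : (Sum.elim (fun t => cl fun k : ℕ => a ⌊Real.exp q * k⌋₊ t)
      (fun t => cl fun k : ℕ => b ⌊Real.exp r * k⌋₊ t)) =
      fun s => cl (fun k => Sum.elim (a ⌊Real.exp q * k⌋₊) (b ⌊Real.exp r * k⌋₊) s) := by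
    funext s
    rcases s with s | s <;> rfl
  refine Iff.trans (iff_of_eq (congrArg φ.Realize e)) ?_
  refine Iff.trans (realize_cl _ _) ?_
  simp only [hab]
  by_cases hqr : q < r
  · have hlt : 0 < Real.exp r - Real.exp q := sub_pos.2 (Real.exp_lt_exp.2 hqr)
    obtain ⟨K, hK⟩ := exists_nat_gt (1 / (Real.exp r - Real.exp q))
    refine ev_iff K fun k hk => iff_of_true ?_ hqr
    have hk' : (K : ℝ) ≤ k := by exact_mod_cast hk
    rw [div_lt_iff₀ hlt] at hK
    have h1 : Real.exp q * k + 1 ≤ Real.exp r * k := by nlinarith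
    have h2 : 0 ≤ Real.exp q * k := by positivity
    rw [← Nat.succ_le_iff]
    apply Nat.le_floor
    push_cast
    linarith [Nat.floor_le h2]
  · refine ev_iff 0 fun k hk => iff_of_false ?_ hqr
    rw [not_lt]
    apply Nat.floor_mono
    have : Real.exp r ≤ Real.exp q := Real.exp_le_exp.2 (not_lt.1 hqr)
    gcongr

/-- Monotone sequences in infinite sets of reals. -/
theorem ladder_real (S : Set ℝ) (hS : S.Infinite) : ∃ (q : ℕ → ℚ) (r : ℕ → ℝ), (∀ i, r i ∈ S) ∧
    ((∀ i j, ((q i : ℝ) < r j ↔ i < j)) ∨ (∀ i j, (¬ (q i : ℝ) < r j ↔ i < j))) := by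
  let f := hS.natEmbedding
  obtain ⟨g, hg⟩ := exists_increasing_or_nonincreasing_subseq (· < ·) (fun i => (f i : ℝ))
  rcases hg with hg | hg
  · have hm : StrictMono (fun i => (f (g i) : ℝ)) := fun i j h => hg i j h
    choose q hq1 hq2 using fun i => exists_rat_btwn (hm (Nat.lt_succ_self i))
    refine ⟨q, fun i => f (g i), fun i => (f (g i)).2, Or.inl fun i j => ⟨fun h => ?_, fun h => ?_⟩⟩
    · by_contra hc
      exact absurd (hm.monotone (not_lt.1 hc)) (not_le.2 ((hq1 i).trans h))
    · exact (hq2 i).trans_le (hm.monotone h)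
  · have hm : StrictAnti (fun i => (f (g i) : ℝ)) := fun i j h =>
      lt_of_le_of_ne (not_lt.1 (hg i j h)) fun e =>
        h.ne' (g.injective (f.injective (Subtype.ext e)))
    choose q hq1 hq2 using fun i => exists_rat_btwn (hm (Nat.lt_succ_self i))
    refine ⟨q, fun i => f (g i), fun i => (f (g i)).2, Or.inr fun i j => ⟨fun h => ?_, fun h => ?_⟩⟩
    · by_contra hc
      exact h ((hq2 i).trans_le (hm.antitone (not_lt.1 hc)))
    · exact not_lt.2 ((hm.antitone (Nat.succ_le_of_lt h)).trans (hq1 i).le)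

theorem op_refl {N : Type (max u v)} [L.Structure N] {m n : ℕ} {κ : Type} [Finite κ]
    (θ : L.Formula ((Fin m ⊕ Fin n) ⊕ κ)) (e : κ → N) (a : ℕ → Fin m → N) (b : ℕ → Fin n → N)
    (h : ∀ i j : ℕ, θ.Realize (Sum.elim (Sum.elim (a i) (b j)) e) ↔ i < j) :
    ∃ (k : ℕ) (ψ : L.Formula ((Fin m ⊕ Fin n) ⊕ Fin k)) (c : Fin k → N),
      HasOPWithParams ψ c := by
  obtain ⟨k, ⟨E⟩⟩ := Finite.exists_equiv_fin κ
  refine ⟨k, θ.relabel (Sum.map id E), e ∘ E.symm, ⟨N, ElementaryEmbedding.refl L _⟩, a, b,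
    fun i j => ?_⟩
  rw [Formula.realize_relabel, ← h i j]
  refine iff_of_eq (congrArg θ.Realize ?_)
  funext s
  rcases s with s | s
  · rfl
  · simp

end Model

theorem main {L : FirstOrder.Language.{u, v}} (T : L.Theory)
    {m n : ℕ} (hn : 1 ≤ n) (φ : L.Formula (Fin m ⊕ Fin (n + 1)))
    (hφ : FormulaHasOP T φ) :
    ∃ (M : FirstOrder.Language.Theory.ModelType.{u, v, max u v} T) (n' k : ℕ),
      n' < n + 1 ∧ ∃ (ψ : L.Formula ((Fin m ⊕ Fin n') ⊕ Fin k)) (c : Fin k → M),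
        HasOPWithParams ψ c := by
  obtain ⟨N, a, b, hab⟩ := stretch T φ hφ
  by_cases hU : ∀ h, ∃ c : Fin n → N, Sh (rel φ c) h Set.univ Set.univ
  · by_cases hpos : ∀ k, ∃ c : Fin n → N, Lad (rel φ c) k Set.univ Set.univ
    · obtain ⟨M, ψ, c, h⟩ := op_of_lad T N φ hpos
      exact ⟨M, 1, n, by omega, ψ, c, h⟩
    · push Not at hpos
      obtain ⟨p, hp⟩ := hpos
      obtain ⟨M, ψ, c, h⟩ := op_of_lad T N φ.not (fun q => by
        obtain ⟨c, hc⟩ := hU (ht (p + q))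
        refine ⟨c, ?_⟩
        rcases lad_of_sh _ _ p q rfl _ _ hc with h | h
        · exact absurd h (hp c)
        · exact h)
      exact ⟨M, 1, n, by omega, ψ, c, h⟩
  · push Not at hU
    obtain ⟨h0, hh⟩ := hU
    have hb : ∀ r q, rel φ (fun i => b r (Fin.succ i)) (a q) (b r 0) ↔ q < r := by
      intro r q
      rw [rel, ← hab q r]
      have : (Fin.cons (b r 0) (fun i => b r (Fin.succ i)) : Fin (n + 1) → N) = b r :=
        Fin.cons_self_tail _
      rw [this]
    have hdef : ∀ r : ℝ, ∃ s : ℕ × List (ℚ × Bool), ∀ q : ℚ, (q : ℝ) < r ↔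
        Sh (rel φ (fun i => b r (Fin.succ i))) s.1 Set.univ
          {z | z ∈ Dp (rel φ (fun i => b r (Fin.succ i))) (fun q : ℚ => a q) s.2 ∧
            rel φ (fun i => b r (Fin.succ i)) (a q) z} := by
      intro r
      obtain ⟨R, p, h⟩ := definability (rel φ (fun i => b r (Fin.succ i))) (fun q : ℚ => a q)
        (b r 0) h0 (hh _)
      exact ⟨⟨R, p⟩, fun q => (hb r q).symm.trans (h q)⟩
    choose s hs using hdef
    obtain ⟨⟨R, p⟩, hinf⟩ : ∃ t, (s ⁻¹' {t}).Infinite := by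
      by_contra hc
      push Not at hc
      have : (Set.univ : Set ℝ).Countable := by
        have e : (Set.univ : Set ℝ) = ⋃ t, s ⁻¹' {t} := by ext; simp
        rw [e]
        exact Set.countable_iUnion fun t => (Set.not_infinite.1 (by simpa using hc t)).countable
      exact Cardinal.not_countable_real this
    obtain ⟨q, r, hr, hqr⟩ := ladder_real _ hinf
    -- the formula
    let κ : Type := Fin p.length × Fin m
    let γ : Type := (Fin m ⊕ Fin n) ⊕ κ
    let e : κ → N := fun t => a (p.get t.1).1 t.2
    let F : (Fin m → γ) → L.Formula (γ ⊕ Fin 1) := fun g => φ.relabel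
      (Sum.elim (fun i => Sum.inl (g i))
        (Fin.cons (Sum.inr 0) (fun i => Sum.inl (Sum.inl (Sum.inr i))) :
          Fin (n + 1) → γ ⊕ Fin 1))
    have hF : ∀ g (x : Fin m → N) (y : Fin n → N) (z : N),
        (F g).Realize (Sum.elim (Sum.elim (Sum.elim x y) e) (fun _ => z)) ↔
          rel φ y (fun i => Sum.elim (Sum.elim x y) e (g i)) z := by
      intro g x y z
      rw [Formula.realize_relabel, rel]
      refine iff_of_eq (congrArg φ.Realize ?_)
      funext k
      rcases k with k | k
      · rfl
      · refine Fin.cases ?_ (fun k => ?_) k <;> simp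
    let G : Fin p.length → L.Formula (γ ⊕ Fin 1) := fun l =>
      if (p.get l).2 = true then F (fun i => Sum.inr (l, i)) else (F (fun i => Sum.inr (l, i))).not
    have hG : ∀ l (x : Fin m → N) (y : Fin n → N) (z : N),
        (G l).Realize (Sum.elim (Sum.elim (Sum.elim x y) e) (fun _ => z)) ↔
          (rel φ y (a (p.get l).1) z ↔ (p.get l).2 = true) := by
      intro l x y z
      have h1 := hF (fun i => Sum.inr (l, i)) x y z
      have h2 : (fun i => Sum.elim (Sum.elim x y) e (Sum.inr (l, i))) = a (p.get l).1 := rfl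
      rw [h2] at h1
      by_cases hl : (p.get l).2 = true
      · simp only [G, if_pos hl, h1]
        tauto
      · simp only [G, if_neg hl, Formula.realize_not, h1]
        tauto
    let δ : L.Formula (γ ⊕ Fin 1) := Formula.iInf G ⊓ F (fun i => Sum.inl (Sum.inl i))
    have hδ : ∀ (x : Fin m → N) (y : Fin n → N) (z : N),
        δ.Realize (Sum.elim (Sum.elim (Sum.elim x y) e) (fun _ => z)) ↔
          (z ∈ Dp (rel φ y) (fun q : ℚ => a q) p ∧ rel φ y x z) := by
      intro x y z
      simp only [δ, Formula.realize_inf, Formula.realize_iInf, hG, hF, Dp, Set.mem_ofPred_eq,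
        Sum.elim_inl]
      refine and_congr_left' ?_
      constructor
      · intro h t ht
        obtain ⟨l, rfl⟩ := List.mem_iff_get.1 ht
        exact h l
      · intro h l
        exact h _ (List.get_mem p l)
    obtain ⟨θ, hθ⟩ := sh_def (N := N) φ R (γ := γ) (fun i => Sum.inl (Sum.inr i)) δ
    have hfin : ∀ i j, θ.Realize (Sum.elim (Sum.elim (a (q i))
        (fun t => b (r j) (Fin.succ t))) e) ↔ (q i : ℝ) < r j := by
      intro i j
      rw [hθ, hs (r j) (q i)]
      have hrj : s (r j) = (R, p) := hr j
      rw [hrj]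
      simp only [hδ]
      rfl
    rcases hqr with h | h
    · obtain ⟨k, ψ, c, H⟩ := op_refl θ e (fun i => a (q i)) (fun j t => b (r j) (Fin.succ t))
        (fun i j => (hfin i j).trans (h i j))
      exact ⟨N, n, k, by omega, ψ, c, H⟩
    · obtain ⟨k, ψ, c, H⟩ := op_refl θ.not e (fun i => a (q i)) (fun j t => b (r j) (Fin.succ t))
        (fun i j => by rw [Formula.realize_not, hfin i j]; exact h i j)
      exact ⟨N, n, k, by omega, ψ, c, H⟩

end OPRed

/-- If a parameter-free formula `φ(x̄; ȳ)` has the order property and `|ȳ| ≥ 2`,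
then there are a model `M` of `T` and a formula `ψ(x̄; ȳ')` with parameters from `M`, with
`|ȳ'| < |ȳ|`, which has the order property. -/
theorem order_property_reduction {L : FirstOrder.Language.{u, v}} (T : L.Theory)
    (hT : T.IsComplete) {m n : ℕ} (hn : 2 ≤ n) (φ : L.Formula (Fin m ⊕ Fin n))
    (hφ : FormulaHasOP T φ) :
    ∃ (M : FirstOrder.Language.Theory.ModelType.{u, v, max u v} T) (n' k : ℕ),
      n' < n ∧ ∃ (ψ : L.Formula ((Fin m ⊕ Fin n') ⊕ Fin k)) (c : Fin k → M),
        HasOPWithParams ψ c := by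
  obtain ⟨n, rfl⟩ : ∃ l, n = l + 1 := ⟨n - 1, by omega⟩
  exact OPRed.main T (by omega) φ hφ
end

section
/- Let T be a complete first-order theory and let φ(x̄;ȳ) be a formula without parameters that has the independence property, where the tuple ȳ has length at least 2. Then there exist a model M of T and a formula ψ(x̄;ȳ') with parameters from M such that |ȳ'| < |ȳ| and ψ(x̄;ȳ') has the independence property. -/
open FirstOrder FirstOrder.Language

universe u v

open Finset in
/-- Chen–Cheng–Tang: a class of VC dimension at most `d` has a concept with a teaching set of size
bounded in terms of `d`. -/
theorem teach_aux (d : ℕ) : ∃ q : ℕ, ∀ (N : ℕ) (C : Finset (Finset (Fin N))), C.Nonempty →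
    (∀ K, C.Shatters K → K.card ≤ d) →
    ∃ h ∈ C, ∃ W : Finset (Fin N), W.card ≤ q ∧ ∀ g ∈ C, W ∩ g = W ∩ h → g = h := by
  classical
  induction d with
  | zero =>
    refine ⟨0, fun N C ⟨h, hh⟩ hC => ⟨h, hh, ∅, by simp, fun g hg _ => ?_⟩⟩
    by_contra hne
    have : ∃ i, ¬ (i ∈ g ↔ i ∈ h) := by
      by_contra hc
      push Not at hc
      exact hne (Finset.ext hc)
    obtain ⟨i, hi⟩ := this
    have := hC {i} (by
      intro t ht
      rcases Finset.subset_singleton_iff.1 ht with rfl | rfl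
      · by_cases h1 : i ∈ g
        · exact ⟨h, hh, by ext; simp; grind⟩
        · exact ⟨g, hg, by ext; simp; grind⟩
      · by_cases h1 : i ∈ g
        · exact ⟨g, hg, by ext; simp; grind⟩
        · exact ⟨h, hh, by ext; simp; grind⟩)
    simp at this
  | succ d ih =>
    obtain ⟨q, hq⟩ := ih
    set k := 2 ^ (d + 1) * d + d + 1 with hk
    refine ⟨k + q, fun N C hne hC => ?_⟩
    let B : Finset (Fin N) → Finset (Fin N) → Finset (Finset (Fin N)) :=
      fun W h => C.filter (fun g => W ∩ g = W ∩ h)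
    let P : Finset (Finset (Fin N) × Finset (Fin N)) :=
      univ.filter (fun p => p.1.card ≤ k ∧ p.2 ∈ C)
    have hP : P.Nonempty := by
      obtain ⟨h, hh⟩ := hne
      exact ⟨(∅, h), by simp [P, hh]⟩
    obtain ⟨⟨W, h⟩, hWP, hmin⟩ := P.exists_min_image (fun p => (B p.1 p.2).card) hP
    simp only [P, mem_filter, mem_univ, true_and] at hWP
    obtain ⟨hWk, hh⟩ := hWP
    have hmin' : ∀ W' h', W'.card ≤ k → h' ∈ C → ¬ (B W' h' ⊂ B W h) := by
      intro W' h' h1 h2 h3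
      have := hmin (W', h') (by simp [P, h1, h2])
      exact absurd (Finset.card_lt_card h3) (by simpa using this)
    have hVC : ∀ K, (B W h).Shatters K → K.card ≤ d := by
      intro K hK
      by_contra hcard
      have hCK : C.Shatters K := hK.mono_left (Finset.filter_subset _ _)
      have hKd : K.card = d + 1 := by have := hC K hCK; omega
      -- W and K are disjoint
      have hdis : ∀ y ∈ W, y ∉ K := by
        intro y hyW hyK
        obtain ⟨u, hu, hu'⟩ := hK (Finset.empty_subset K)
        obtain ⟨v, hv, hv'⟩ := hK (Finset.Subset.refl K)
        simp only [B, mem_filter] at hu hv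
        have h1 := congrArg (y ∈ ·) hu.2
        have h2 := congrArg (y ∈ ·) hv.2
        have h3 := congrArg (y ∈ ·) hu'
        have h4 := congrArg (y ∈ ·) hv'
        simp [hyW, hyK] at h1 h2 h3 h4
        grind
      -- there is an implied pattern for each y in W
      have hpat : ∀ y ∈ W, ∃ p ⊆ K, ∀ g ∈ C, K ∩ g = p → (y ∈ g ↔ y ∈ h) := by
        intro y hy
        by_contra hc
        push Not at hc
        have : C.Shatters (insert y K) := by
          intro t ht
          by_cases hyt : y ∈ t ↔ y ∈ h
          · obtain ⟨u, hu, hu'⟩ := hK (t := t.erase y) (by intro z hz; have := @ht z; grind)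
            simp only [B, mem_filter] at hu
            refine ⟨u, hu.1, ?_⟩
            have h1 := congrArg (y ∈ ·) hu.2
            simp [hy] at h1
            ext z
            have h3 := congrArg (z ∈ ·) hu'
            have := @ht z
            have := hdis y hy
            simp at h3 this ⊢
            by_cases hz : z = y
            · subst hz; grind
            · grind
          · obtain ⟨g, hg, hg', hg''⟩ := hc (t.erase y) (by intro z hz; have := @ht z; grind)
            refine ⟨g, hg, ?_⟩
            ext z
            have h3 := congrArg (z ∈ ·) hg'
            have := @ht z
            have := hdis y hy
            simp at h3 this ⊢
            by_cases hz : z = y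
            · subst hz; grind
            · grind
        have h1 := hC _ this
        rw [Finset.card_insert_of_notMem (hdis y hy)] at h1
        omega
      -- strictness
      have hstrict : ∀ W' h', K ⊆ W' → (B W' h' ⊆ B W h) → B W' h' ⊂ B W h := by
        intro W' h' h1 h2
        refine Finset.ssubset_iff_subset_ne.2 ⟨h2, fun heq => ?_⟩
        obtain ⟨z, hz⟩ : K.Nonempty := Finset.card_pos.1 (by omega)
        obtain ⟨u, hu, hu'⟩ := hK (Finset.empty_subset K)
        obtain ⟨v, hv, hv'⟩ := hK (Finset.Subset.refl K)
        rw [← heq] at hu hv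
        simp only [B, mem_filter] at hu hv
        have g1 := congrArg (z ∈ ·) hu.2
        have g2 := congrArg (z ∈ ·) hv.2
        have g3 := congrArg (z ∈ ·) hu'
        have g4 := congrArg (z ∈ ·) hv'
        simp [h1 hz, hz] at g1 g2 g3 g4
        grind
      by_cases hsmall : W.card ≤ 2 ^ (d + 1) * d
      · refine hmin' (W ∪ K) h ?_ hh (hstrict _ _ subset_union_right ?_)
        · have := Finset.card_union_le W K
          omega
        · intro g hg
          simp only [B, mem_filter] at hg ⊢
          refine ⟨hg.1, ?_⟩
          ext z
          have := congrArg (z ∈ ·) hg.2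
          simp at this ⊢
          grind
      · have hch : ∀ y, ∃ p ⊆ K, y ∈ W → ∀ g ∈ C, K ∩ g = p → (y ∈ g ↔ y ∈ h) := by
          intro y
          by_cases hy : y ∈ W
          · obtain ⟨p, h1, h2⟩ := hpat y hy
            exact ⟨p, h1, fun _ => h2⟩
          · exact ⟨∅, by simp, fun h => absurd h hy⟩
        choose p hpK hp using hch
        obtain ⟨p0, hp0, hfib⟩ := Finset.exists_lt_card_fiber_of_mul_lt_card_of_maps_to
          (s := W) (t := K.powerset) (f := p) (n := d) (fun y _ => by simpa using hpK y)
          (by rw [Finset.card_powerset, hKd]; omega)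
        obtain ⟨h', hh', hh'p⟩ := hK (Finset.mem_powerset.1 hp0)
        set Y := W.filter (fun y => p y = p0) with hY
        simp only [B, mem_filter] at hh'
        refine hmin' ((W \ Y) ∪ K) h' ?_ hh'.1 (hstrict _ _ subset_union_right ?_)
        · have h1 := Finset.card_union_le (W \ Y) K
          have h2 := Finset.card_sdiff_add_card_eq_card (s := Y) (t := W) (Finset.filter_subset _ _)
          omega
        · intro g hg
          simp only [B, mem_filter] at hg ⊢
          have hgK : K ∩ g = p0 := by
            rw [← hh'p]
            ext z
            have := congrArg (z ∈ ·) hg.2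
            simp at this ⊢
            grind
          refine ⟨hg.1, ?_⟩
          ext z
          have h1 := congrArg (z ∈ ·) hg.2
          have h2 := congrArg (z ∈ ·) hh'.2
          simp [Y] at h1 h2 ⊢
          by_cases hz : p z = p0
          · intro hzW
            exact hp z hzW g hg.1 (hgK.trans hz.symm)
          · grind
    obtain ⟨h0, hh0, W0, hW0, ht⟩ := hq N (B W h) ⟨h, by simp [B, hh]⟩ hVC
    simp only [B, mem_filter] at hh0
    refine ⟨h0, hh0.1, W ∪ W0, (Finset.card_union_le _ _).trans (by omega), fun g hg hgW => ?_⟩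
    apply ht g
    · simp only [B, mem_filter]
      refine ⟨hg, ?_⟩
      rw [← hh0.2]
      ext z
      have := congrArg (z ∈ ·) hgW
      simp at this ⊢
      grind
    · ext z
      have := congrArg (z ∈ ·) hgW
      simp at this ⊢
      grind

/-- The relation `R` shatters some family of `D` points. -/
def Shat {X Y : Type*} (R : X → Y → Prop) (D : ℕ) : Prop :=
  ∃ a : Fin D → X, ∀ S : Set (Fin D), ∃ y, ∀ i, R (a i) y ↔ i ∈ S

theorem Shat.mono {X Y : Type*} {R : X → Y → Prop} {D D' : ℕ} (h : D' ≤ D) (hR : Shat R D) :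
    Shat R D' := by
  obtain ⟨a, ha⟩ := hR
  refine ⟨a ∘ Fin.castLE h, fun S => ?_⟩
  obtain ⟨y, hy⟩ := ha (Fin.castLE h '' S)
  refine ⟨y, fun i => ?_⟩
  rw [Function.comp, hy]
  constructor
  · rintro ⟨j, hj, hji⟩
    rwa [← Fin.castLE_injective h hji]
  · exact fun hi => ⟨i, hi, rfl⟩

open Classical in
/-- The traces of the relation `R` on the points `a`. -/
noncomputable def trc {X Y ι : Type*} [Fintype ι] (R : X → Y → Prop) (a : ι → X) :
    Finset (Finset ι) :=
  Finset.univ.filter (fun s => ∃ y, ∀ i, R (a i) y ↔ i ∈ s)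

theorem trc_shat {X Y ι : Type*} [Fintype ι] [DecidableEq ι] {R : X → Y → Prop} {a : ι → X}
    {K : Finset ι} (h : (trc R a).Shatters K) : Shat R K.card := by
  classical
  refine ⟨fun i => a (K.equivFin.symm i), fun S => ?_⟩
  obtain ⟨u, hu, hu'⟩ := h (t := K.filter (fun i => ∃ j ∈ S, (K.equivFin.symm j : ι) = i))
    (Finset.filter_subset _ _)
  simp only [trc, Finset.mem_filter, Finset.mem_univ, true_and] at hu
  obtain ⟨y, hy⟩ := hu
  refine ⟨y, fun i => ?_⟩
  rw [hy]
  have h1 := congrArg ((K.equivFin.symm i : ι) ∈ ·) hu'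
  simp at h1
  rw [h1]

theorem trc_card {X Y ι : Type*} [Fintype ι] {R : X → Y → Prop} {D : ℕ} (hR : ¬ Shat R D)
    (a : ι → X) : (trc R a).card ≤ (D + 1) * (Fintype.card ι + 1) ^ D := by
  classical
  have hv : (trc R a).vcDim ≤ D := by
    refine Finset.sup_le fun K hK => ?_
    by_contra hc
    exact hR ((trc_shat (Finset.mem_shatterer.1 hK)).mono (by omega))
  refine (Finset.card_le_card_shatterer _).trans
    ((Finset.card_shatterer_le_sum_vcDim (𝒜 := trc R a)).trans ?_)
  calc _ ≤ ∑ k ∈ Finset.Iic D, (Fintype.card ι).choose k :=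
        Finset.sum_le_sum_of_subset (Finset.Iic_subset_Iic.2 hv)
    _ ≤ ∑ k ∈ Finset.Iic D, (Fintype.card ι + 1) ^ D := by
        refine Finset.sum_le_sum fun k hk => ?_
        refine (Nat.choose_le_pow _ _).trans ?_
        refine (Nat.pow_le_pow_left (Nat.le_succ _) k).trans ?_
        exact Nat.pow_le_pow_right (by omega) (Finset.mem_Iic.1 hk)
    _ = _ := by simp

theorem growth (A k : ℕ) {r : ℝ} (hr : 1 < r) : ∃ n : ℕ, 1 ≤ n ∧ (A : ℝ) * (n : ℝ) ^ k < r ^ n := by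
  have h := tendsto_pow_const_div_const_pow_of_one_lt k hr
  have h2 : ∀ᶠ n : ℕ in Filter.atTop, (n : ℝ) ^ k / r ^ n < 1 / (A + 1) :=
    h.eventually_lt_const (by positivity)
  obtain ⟨n, hn, hn1⟩ := (h2.and (Filter.eventually_ge_atTop 1)).exists
  refine ⟨n, hn1, ?_⟩
  have hp : 0 < r ^ n := by positivity
  rw [div_lt_div_iff₀ hp (by positivity)] at hn
  have : (0 : ℝ) ≤ (n : ℝ) ^ k := by positivity
  nlinarith

theorem growth2 (d : ℕ) : ∃ e : ℕ, 1 ≤ e ∧ (d + 1) * (e * (5 * e * 2) + 1) ^ d < 2 ^ e := by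
  obtain ⟨e, he, h⟩ := growth ((d + 1) * 11 ^ d) (2 * d) (r := 2) (by norm_num)
  refine ⟨e, he, ?_⟩
  have h' : ((d + 1) * 11 ^ d) * e ^ (2 * d) < 2 ^ e := by exact_mod_cast h
  refine lt_of_le_of_lt ?_ h'
  rw [mul_assoc (d + 1), pow_mul e, ← mul_pow]
  gcongr
  nlinarith

/-- The set of points where two sets agree. -/
def agr {N : ℕ} (h S : Finset (Fin N)) : Finset (Fin N) :=
  Finset.univ.filter (fun i => i ∈ h ↔ i ∈ S)

theorem agr_agr {N : ℕ} (h S : Finset (Fin N)) : agr h (agr h S) = S := by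
  ext i
  simp [agr]
  tauto

theorem ball_card {M : ℕ} (h : Finset (Fin (4 * M))) :
    (Finset.univ.filter (fun S => 3 * M ≤ (agr h S).card)).card * 27 ^ M ≤ 256 ^ M := by
  have h1 : ∑ S : Finset (Fin (4 * M)), 3 ^ (agr h S).card = 256 ^ M := by
    have := Fin.sum_pow_mul_eq_add_pow (n := 4 * M) (3 : ℕ) 1
    simp only [one_pow, mul_one] at this
    rw [show (256 : ℕ) ^ M = (3 + 1) ^ (4 * M) by rw [pow_mul]; norm_num, ← this]
    exact Fintype.sum_bijective (agr h) (Function.Involutive.bijective (agr_agr h)) _ _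
      (fun _ => rfl)
  rw [← h1]
  refine le_trans ?_ (Finset.sum_le_sum_of_subset (Finset.filter_subset
    (fun S => 3 * M ≤ (agr h S).card) _))
  rw [← smul_eq_mul]
  refine Finset.card_nsmul_le_sum _ _ _ fun S hS => ?_
  rw [show (27 : ℕ) ^ M = 3 ^ (3 * M) by rw [pow_mul]; norm_num]
  exact Nat.pow_le_pow_right (by norm_num) (by simpa using hS)

open Classical in
/-- One step of the sampling estimate. -/
theorem count_step {ι : Type*} [Fintype ι] [DecidableEq ι] {N : ℕ} (j : ι) (P : (ι → Fin N) → Prop)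
    (G : (ι → Fin N) → Finset (Fin N)) (hP : ∀ w x, P (Function.update w j x) ↔ P w)
    (hG : ∀ w x, G (Function.update w j x) = G w) (hc : ∀ w, 4 * (G w).card ≤ 3 * N) :
    4 * (Finset.univ.filter (fun w => P w ∧ w j ∈ G w)).card ≤
      3 * (Finset.univ.filter (fun w => P w)).card := by
  have key : ∀ f : (ι → Fin N) → ℕ, ∑ w, ∑ x : Fin N, f (Function.update w j x) = N * ∑ w, f w := by
    intro f
    let e := Equiv.funSplitAt j (Fin N)
    rw [← e.symm.sum_comp, ← e.symm.sum_comp f]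
    rw [Fintype.sum_prod_type, Fintype.sum_prod_type]
    have : ∀ (y x : Fin N) (u : {i // i ≠ j} → Fin N),
        Function.update (e.symm (y, u)) j x = e.symm (x, u) := by
      intro y x u
      ext i
      by_cases hi : i = j
      · subst hi; simp [e]
      · simp [e, hi]
    simp only [this]
    simp only [Finset.sum_const, Finset.card_univ, Fintype.card_fin, smul_eq_mul]
    rw [Finset.sum_comm]
  rcases Nat.eq_zero_or_pos N with hN | hN
  · have h0 : ∀ w, G w = ∅ := fun w => by
      have := hc w
      rw [← Finset.card_eq_zero]
      omega
    simp [h0]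
  · have k1 := key (fun w => if P w ∧ w j ∈ G w then 1 else 0)
    rw [Finset.card_filter, Finset.card_filter]
    refine Nat.le_of_mul_le_mul_left ?_ hN
    calc N * (4 * _) = 4 * (N * ∑ w, if P w ∧ w j ∈ G w then 1 else 0) := by ring
      _ = 4 * ∑ w, ∑ x : Fin N, if P w ∧ x ∈ G w then 1 else 0 := by
          rw [← k1]; simp [hP, hG]
      _ = ∑ w, if P w then 4 * (G w).card else 0 := by
          rw [Finset.mul_sum]
          refine Finset.sum_congr rfl fun w _ => ?_
          by_cases hw : P w <;> simp [hw]
      _ ≤ ∑ w, if P w then 3 * N else 0 := by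
          refine Finset.sum_le_sum fun w _ => ?_
          split_ifs
          · exact hc w
          · exact le_rfl
      _ = _ := by
          rw [Finset.mul_sum, Finset.mul_sum]
          refine Finset.sum_congr rfl fun w _ => ?_
          split_ifs <;> ring

open Classical in
theorem count_all {ι : Type*} [Fintype ι] [DecidableEq ι] {N : ℕ} (J : Finset ι)
    (G : (ι → Fin N) → Finset (Fin N))
    (hG : ∀ j ∈ J, ∀ w x, G (Function.update w j x) = G w) (hc : ∀ w, 4 * (G w).card ≤ 3 * N) :
    4 ^ J.card * (Finset.univ.filter (fun w : ι → Fin N => ∀ j ∈ J, w j ∈ G w)).card ≤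
      3 ^ J.card * N ^ Fintype.card ι := by
  induction J using Finset.induction_on with
  | empty => simp
  | insert j J hj ih =>
    have h1 := count_step j (fun w => ∀ i ∈ J, w i ∈ G w) G (by
      intro w x
      simp only [hG j (Finset.mem_insert_self _ _)]
      refine forall₂_congr fun i hi => ?_
      rw [Function.update_of_ne (by rintro rfl; exact hj hi)]) (hG j (Finset.mem_insert_self _ _)) hc
    have h2 := ih (fun i hi => hG i (Finset.mem_insert_of_mem hi))
    have h3 : (Finset.univ.filter (fun w : ι → Fin N => ∀ i ∈ insert j J, w i ∈ G w)) =
        Finset.univ.filter (fun w => (∀ i ∈ J, w i ∈ G w) ∧ w j ∈ G w) := by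
      ext w
      simp [and_comm]
    rw [h3, Finset.card_insert_of_notMem hj, pow_succ, pow_succ]
    calc _ = 4 ^ J.card * (4 * (Finset.univ.filter
            (fun w : ι → Fin N => (∀ i ∈ J, w i ∈ G w) ∧ w j ∈ G w)).card) := by ring
      _ ≤ 4 ^ J.card * (3 * (Finset.univ.filter
            (fun w : ι → Fin N => (∀ i ∈ J, w i ∈ G w))).card) := by
          refine Nat.mul_le_mul_left _ ?_
          convert h1
      _ = 3 * (4 ^ J.card * (Finset.univ.filter
            (fun w : ι → Fin N => (∀ i ∈ J, w i ∈ G w))).card) := by ring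
      _ ≤ 3 * (3 ^ J.card * N ^ Fintype.card ι) := Nat.mul_le_mul_left _ h2
      _ = _ := by ring

/-- Index set of the random sample. -/
abbrev SIdx (e : ℕ) : Type := Fin e × Fin (5 * e) × Bool

open Classical in
/-- Every member of a class of bounded VC dimension is approximated by a member of the class with
a bounded teaching set. -/
theorem approx (d : ℕ) : ∃ q : ℕ, ∀ (N : ℕ) (S : Finset (Fin N)) (C : Finset (Finset (Fin N))),
    S ∈ C → (∀ K, C.Shatters K → K.card ≤ d) →
    ∃ h ∈ C, ∃ W : Finset (Fin N), W.card ≤ q ∧ (∀ g ∈ C, W ∩ g = W ∩ h → g = h) ∧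
      3 * N ≤ 4 * (agr h S).card := by
  obtain ⟨q, hq⟩ := teach_aux d
  obtain ⟨e, he1, he⟩ := growth2 (d + 1)
  refine ⟨Fintype.card (SIdx e) + q, fun N S C hS hC => ?_⟩
  by_contra hcon
  push Not at hcon
  -- the teaching concept
  have hT : ∀ C' : Finset (Finset (Fin N)), ∃ h : Finset (Fin N), C' ⊆ C → S ∈ C' →
      h ∈ C' ∧ ∃ W : Finset (Fin N), W.card ≤ q ∧ ∀ g ∈ C', W ∩ g = W ∩ h → g = h := by
    intro C'
    by_cases h1 : C' ⊆ C ∧ S ∈ C'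
    · obtain ⟨h, hh, W, hW⟩ := hq N C' ⟨S, h1.2⟩ (fun K hK => hC K (hK.mono_left h1.1))
      exact ⟨h, fun _ _ => ⟨hh, W, hW⟩⟩
    · exact ⟨∅, fun h2 h3 => absurd ⟨h2, h3⟩ h1⟩
  choose T hT using hT
  let sub : (Fin e → Bool) → ((SIdx e) → Fin N) → Finset (Finset (Fin N)) := fun F w =>
    C.filter (fun g => ∀ i k, (w (i, k, F i) ∈ g ↔ w (i, k, F i) ∈ S))
  let H : (Fin e → Bool) → ((SIdx e) → Fin N) → Finset (Fin N) := fun F w => T (sub F w)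
  have hH : ∀ F w, H F w ∈ sub F w ∧ ∃ W : Finset (Fin N), W.card ≤ q ∧
      ∀ g ∈ sub F w, W ∩ g = W ∩ H F w → g = H F w := fun F w =>
    hT _ (Finset.filter_subset _ _) (by simp [sub, hS])
  have hHC : ∀ F w, H F w ∈ C := fun F w => (Finset.mem_filter.1 (hH F w).1).1
  have hHS : ∀ F w i k, (w (i, k, F i) ∈ H F w ↔ w (i, k, F i) ∈ S) :=
    fun F w => (Finset.mem_filter.1 (hH F w).1).2
  have hagr : ∀ F w, 4 * (agr (H F w) S).card < 3 * N := by
    intro F w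
    obtain ⟨W, hW, hWt⟩ := (hH F w).2
    refine hcon _ (hHC F w) (Finset.univ.image w ∪ W) ?_ ?_
    · refine (Finset.card_union_le _ _).trans (Nat.add_le_add ?_ hW)
      exact Finset.card_image_le.trans (by simp)
    · intro g hg hgW
      refine hWt g ?_ ?_
      · simp only [sub, Finset.mem_filter]
        refine ⟨hg, fun i k => ?_⟩
        rw [← hHS F w i k]
        have := congrArg (w (i, k, F i) ∈ ·) hgW
        simpa using this
      · ext z
        have := congrArg (z ∈ ·) hgW
        simp at this ⊢
        tauto
  have hN : 0 < N := by
    have := hagr (fun _ => true)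
    by_contra h0
    have hN0 : N = 0 := by omega
    have hTc : 4 * (agr (T C) S).card < 3 * N := by
      obtain ⟨h1, W, h2, h3⟩ := hT C (Finset.Subset.refl _) hS
      exact hcon _ h1 W (by omega) h3
    omega
  -- bad events
  let bad : (Fin e → Bool) × Fin e → Finset ((SIdx e) → Fin N) := fun p =>
    Finset.univ.filter (fun w => ∀ k, w (p.2, k, !p.1 p.2) ∈ agr (H p.1 w) S)
  have hbad : ∀ p, 4 ^ (5 * e) * (bad p).card ≤ 3 ^ (5 * e) * N ^ Fintype.card (SIdx e) := by
    rintro ⟨F, i⟩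
    let J : Finset (SIdx e) := Finset.univ.image (fun k : Fin (5 * e) => (i, k, !F i))
    have hJ : J.card = 5 * e := by
      rw [Finset.card_image_of_injective _ (by
        intro a b hab
        simp only [Prod.mk.injEq] at hab
        exact hab.2.1)]
      simp
    have := count_all J (fun w => agr (H F w) S) (by
      intro j hj w x
      simp only [J, Finset.mem_image, Finset.mem_univ, true_and] at hj
      obtain ⟨k, rfl⟩ := hj
      have : sub F (Function.update w (i, k, !F i) x) = sub F w := by
        have hne : ∀ i' k', Function.update w (i, k, !F i) x (i', k', F i') = w (i', k', F i') := by
          intro i' k'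
          refine Function.update_of_ne ?_ _ _
          intro hc
          simp only [Prod.mk.injEq] at hc
          obtain ⟨rfl, -, h3⟩ := hc
          simp at h3
        simp only [sub, hne]
      simp only [H, this]) (fun w => (hagr F w).le)
    rw [hJ] at this
    convert this using 4
    simp [J]
  have hgood : ∃ w : (SIdx e) → Fin N, ∀ F i, ∃ k, w (i, k, !F i) ∉ agr (H F w) S := by
    by_contra hc
    push Not at hc
    have hcov : (Finset.univ : Finset ((SIdx e) → Fin N)) ⊆ Finset.univ.biUnion bad := by
      intro w _
      obtain ⟨F, i, h⟩ := hc w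
      exact Finset.mem_biUnion.2 ⟨(F, i), Finset.mem_univ _, by simpa [bad] using h⟩
    have h1 := (Finset.card_le_card hcov).trans Finset.card_biUnion_le
    have h2 : 4 ^ (5 * e) * N ^ Fintype.card (SIdx e) ≤
        (2 ^ e * e) * (3 ^ (5 * e) * N ^ Fintype.card (SIdx e)) := by
      calc _ = 4 ^ (5 * e) * (Finset.univ : Finset ((SIdx e) → Fin N)).card := by simp
        _ ≤ 4 ^ (5 * e) * ∑ p, (bad p).card := Nat.mul_le_mul_left _ h1
        _ = ∑ p, 4 ^ (5 * e) * (bad p).card := Finset.mul_sum _ _ _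
        _ ≤ ∑ p : (Fin e → Bool) × Fin e, 3 ^ (5 * e) * N ^ Fintype.card (SIdx e) :=
            Finset.sum_le_sum fun p _ => hbad p
        _ = _ := by simp
    rw [← mul_assoc] at h2
    have h3 := Nat.le_of_mul_le_mul_right h2 (by positivity)
    have h4 : 2 ^ e * e * 3 ^ (5 * e) < 4 ^ (5 * e) := by
      calc _ < 2 ^ e * 2 ^ e * 3 ^ (5 * e) := by
            gcongr
            exact Nat.lt_two_pow_self
        _ = 972 ^ e := by
            rw [pow_mul, ← mul_pow, ← mul_pow]
            norm_num
        _ ≤ 1024 ^ e := Nat.pow_le_pow_left (by norm_num) _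
        _ = 4 ^ (5 * e) := by rw [pow_mul]; norm_num
    omega
  obtain ⟨w, hw⟩ := hgood
  -- too many traces
  let R : Fin N → {g // g ∈ C} → Prop := fun i g => i ∈ g.1
  have hR : ¬ Shat R (d + 1) := by
    rintro ⟨a, ha⟩
    have hinj : Function.Injective a := by
      intro i j hij
      obtain ⟨y, hy⟩ := ha {i}
      have h1 := (hy i).2 rfl
      rw [hij] at h1
      exact ((hy j).1 h1).symm
    have : C.Shatters (Finset.univ.image a) := by
      intro t ht
      obtain ⟨y, hy⟩ := ha {i | a i ∈ t}
      refine ⟨y.1, y.2, ?_⟩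
      ext z
      simp only [Finset.mem_inter, Finset.mem_image, Finset.mem_univ, true_and]
      constructor
      · rintro ⟨⟨i, rfl⟩, h2⟩
        exact (hy i).1 h2
      · intro hz
        obtain ⟨i, -, rfl⟩ := Finset.mem_image.1 (ht hz)
        exact ⟨⟨i, rfl⟩, (hy i).2 hz⟩
    have := hC _ this
    rw [Finset.card_image_of_injective _ hinj] at this
    simp at this
  have hcard := trc_card hR w
  have hlow : 2 ^ e ≤ (trc R w).card := by
    have : (Finset.univ : Finset (Fin e → Bool)).card ≤ (trc R w).card := by
      refine Finset.card_le_card_of_injOn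
        (fun F => Finset.univ.filter (fun j => w j ∈ H F w)) ?_ ?_
      · intro F _
        simp only [trc, Finset.coe_filter, Finset.mem_univ, true_and, Set.mem_ofPred_eq]
        exact ⟨⟨H F w, hHC F w⟩, fun i => by simp [R]⟩
      · intro F _ F' _ hFF
        simp only at hFF
        funext i
        by_contra hne
        have hF' : F' i = !F i := by
          cases h1 : F i <;> cases h2 : F' i <;> simp_all
        obtain ⟨k, hk⟩ := hw F i
        apply hk
        have h1 := hHS F' w i k
        rw [hF'] at h1
        have h2 := congrArg ((i, k, !F i) ∈ ·) hFF
        simp only [Finset.mem_filter, Finset.mem_univ, true_and, eq_iff_iff] at h2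
        simp only [agr, Finset.mem_filter, Finset.mem_univ, true_and]
        exact h2.trans h1
    simpa using this
  have : Fintype.card (SIdx e) = e * (5 * e * 2) := by simp
  rw [this] at hcard
  omega

open Classical in
/-- The combinatorial core. -/
theorem core_s3 {X Y Z : Type*} (R : X → Y → Z → Prop) (D : ℕ)
    (h1 : ∀ z, ¬ Shat (fun x y => R x y z) D)
    (h2 : ∀ k, Shat (fun x (p : Y × Z) => R x p.1 p.2) k) :
    ∃ (q : ℕ) (σ : Fin q → Bool), ∀ E, ∃ w : Fin q → X,
      Shat (fun x z => ∃ y, (∀ i, R (w i) y z ↔ σ i = true) ∧ R x y z) E := by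
  obtain ⟨q, hq⟩ := approx D
  by_contra hcon
  push Not at hcon
  have hcon' := hcon q
  choose E hE using hcon'
  obtain ⟨E0, hE0⟩ : ∃ E0, ∀ σ, E σ ≤ E0 :=
    ⟨∑ σ, E σ, fun σ => Finset.single_le_sum (f := E) (fun _ _ => Nat.zero_le _) (Finset.mem_univ σ)⟩
  have hns : ∀ (σ : Fin q → Bool) (w : Fin q → X), ¬ Shat (fun x z => ∃ y, (∀ i, R (w i) y z ↔ σ i = true) ∧ R x y z) E0 :=
    fun σ w h => hE σ w (h.mono (hE0 σ))
  obtain ⟨M, hM1, hM⟩ := growth (4 ^ q * 2 ^ q * ((E0 + 1) * 5 ^ E0)) (q + E0) (r := 27 / 16)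
    (by norm_num)
  let N := 4 * M
  obtain ⟨a, ha⟩ := h2 N
  let Hs : Finset (Finset (Fin N)) :=
    (Finset.univ : Finset ((Fin q → Fin N) × (Fin q → Bool))).biUnion (fun p =>
      trc (fun x z => ∃ y, (∀ i, R (a (p.1 i)) y z ↔ p.2 i = true) ∧ R x y z) a)
  have hHs : Hs.card ≤ (N ^ q * 2 ^ q) * ((E0 + 1) * (N + 1) ^ E0) := by
    refine Finset.card_biUnion_le.trans ?_
    refine (Finset.sum_le_card_nsmul _ _ _ (fun p _ => trc_card (hns p.2 _) a)).trans ?_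
    simp
  have hcov : (Finset.univ : Finset (Finset (Fin N))) ⊆
      Hs.biUnion (fun h => Finset.univ.filter (fun S => 3 * M ≤ (agr h S).card)) := by
    intro S _
    obtain ⟨⟨y, z⟩, hyz⟩ := ha {i | i ∈ S}
    let C := trc (fun x y => R x y z) a
    have hSC : S ∈ C := by
      simp only [C, trc, Finset.mem_filter, Finset.mem_univ, true_and]
      exact ⟨y, hyz⟩
    obtain ⟨h, hh, W, hW, ht, hag⟩ := hq N S C hSC (by
      intro K hK
      by_contra hc
      exact h1 z ((trc_shat hK).mono (by omega)))
    refine Finset.mem_biUnion.2 ⟨h, ?_, by simp; omega⟩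
    have hen : ∃ w : Fin q → Fin N, ∀ i ∈ W, ∃ j, w j = i := by
      have x0 : Fin N := ⟨0, by omega⟩
      refine ⟨fun j => if hj : j.1 < W.card then W.equivFin.symm ⟨j.1, hj⟩ else x0, fun i hi => ?_⟩
      refine ⟨⟨(W.equivFin ⟨i, hi⟩).1, by omega⟩, ?_⟩
      simp
    obtain ⟨w, hw⟩ := hen
    refine Finset.mem_biUnion.2 ⟨(w, fun j => decide (w j ∈ h)), Finset.mem_univ _, ?_⟩
    simp only [C, trc, Finset.mem_filter, Finset.mem_univ, true_and] at hh ht ⊢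
    obtain ⟨y0, hy0⟩ := hh
    refine ⟨z, fun i => ⟨?_, fun hi => ⟨y0, fun j => by simp [hy0], (hy0 i).2 hi⟩⟩⟩
    rintro ⟨y', hy', hi⟩
    have := ht (Finset.univ.filter (fun i => R (a i) y' z)) ⟨y', by simp⟩ (by
      ext i
      simp only [Finset.mem_inter, Finset.mem_filter, Finset.mem_univ, true_and,
        and_congr_right_iff]
      intro hiW
      obtain ⟨j, rfl⟩ := hw i hiW
      simpa using hy' j)
    rw [← this]
    simpa using hi
  have hfin := (Finset.card_le_card hcov).trans Finset.card_biUnion_le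
  have hfin2 : 16 ^ M * 27 ^ M ≤ ((N ^ q * 2 ^ q) * ((E0 + 1) * (N + 1) ^ E0)) * 256 ^ M := by
    calc 16 ^ M * 27 ^ M = (Finset.univ : Finset (Finset (Fin N))).card * 27 ^ M := by
          simp [N, pow_mul]
      _ ≤ (∑ h ∈ Hs, (Finset.univ.filter (fun S => 3 * M ≤ (agr h S).card)).card) * 27 ^ M :=
          Nat.mul_le_mul_right _ hfin
      _ = ∑ h ∈ Hs, (Finset.univ.filter (fun S => 3 * M ≤ (agr h S).card)).card * 27 ^ M :=
          Finset.sum_mul _ _ _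
      _ ≤ ∑ h ∈ Hs, 256 ^ M := Finset.sum_le_sum fun h _ => ball_card h
      _ = Hs.card * 256 ^ M := by simp
      _ ≤ _ := Nat.mul_le_mul_right _ hHs
  have hfin3 : (N ^ q * 2 ^ q) * ((E0 + 1) * (N + 1) ^ E0) ≤
      4 ^ q * 2 ^ q * ((E0 + 1) * 5 ^ E0) * M ^ (q + E0) := by
    have : N + 1 ≤ 5 * M := by omega
    calc _ ≤ ((4 * M) ^ q * 2 ^ q) * ((E0 + 1) * (5 * M) ^ E0) := by gcongr
      _ = _ := by rw [mul_pow, mul_pow, pow_add]; ring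
  have hfin4 : (16 : ℝ) ^ M * 27 ^ M ≤
      ((4 ^ q * 2 ^ q * ((E0 + 1) * 5 ^ E0) : ℕ) : ℝ) * (M : ℝ) ^ (q + E0) * 256 ^ M := by
    exact_mod_cast hfin2.trans (Nat.mul_le_mul_right _ hfin3)
  have hfin5 : (16 : ℝ) ^ M * 27 ^ M < (27 / 16) ^ M * 256 ^ M :=
    hfin4.trans_lt (mul_lt_mul_of_pos_right hM (by positivity))
  rw [← mul_pow, ← mul_pow] at hfin5
  norm_num at hfin5

open Filter in
/-- Compactness (via an ultrapower): uniformly finite shattering gives the independence property. -/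
theorem ip_of_shat {L : FirstOrder.Language.{u, v}} (T : L.Theory)
    (N : FirstOrder.Language.Theory.ModelType.{u, v, max u v} T) {m n k : ℕ}
    (ψ : L.Formula ((Fin m ⊕ Fin n) ⊕ Fin k))
    (h : ∀ D, ∃ c : Fin k → N,
      Shat (fun (x : Fin m → N) (y : Fin n → N) => ψ.Realize (Sum.elim (Sum.elim x y) c)) D) :
    ∃ (M : FirstOrder.Language.Theory.ModelType.{u, v, max u v} T) (c : Fin k → M),
      HasIPWithParams ψ c := by
  classical
  choose c hc using h
  choose a ha using hc
  choose b hb using ha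
  let U : Ultrafilter ℕ := hyperfilter ℕ
  let P : Type (max u v) := (U : Filter ℕ).Product (fun _ : ℕ => (N : Type (max u v)))
  have hPT : P ⊨ T := by
    refine ⟨fun φ hφ => ?_⟩
    rw [Ultraproduct.sentence_realize]
    exact Eventually.of_forall fun _ => Theory.realize_sentence_of_mem T hφ
  let M : FirstOrder.Language.Theory.ModelType.{u, v, max u v} T := Theory.ModelType.of T P
  have x0 : N := Classical.arbitrary N
  let a' : ℕ → Fin m → ℕ → N := fun i s D => if hi : i < D then a D ⟨i, hi⟩ s else x0
  let b' : Set ℕ → Fin n → ℕ → N := fun S s D => b D {i | i.1 ∈ S} s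
  let c' : Fin k → ℕ → N := fun s D => c D s
  refine ⟨M, fun s => ((c' s : ℕ → N) : P),
    ⟨P, ElementaryEmbedding.refl L P⟩, fun i s => ((a' i s : ℕ → N) : P),
    fun S s => ((b' S s : ℕ → N) : P), fun i S => ?_⟩
  have key := Ultraproduct.realize_formula_cast (u := U) (M := fun _ : ℕ => (N : Type (max u v))) ψ
    (Sum.elim (Sum.elim (a' i) (b' S)) c')
  have e1 : (fun j => ((Sum.elim (Sum.elim (a' i) (b' S)) c' j : ℕ → N) : P)) =
      (Sum.elim (Sum.elim (fun s => ((a' i s : ℕ → N) : P)) (fun s => ((b' S s : ℕ → N) : P)))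
        (fun s => ((c' s : ℕ → N) : P))) := by
    funext j
    rcases j with (j | j) | j <;> rfl
  have e2 : ∀ D, i < D → (ψ.Realize (fun j => Sum.elim (Sum.elim (a' i) (b' S)) c' j D) ↔ i ∈ S) := by
    intro D hD
    have := hb D {i | i.1 ∈ S} ⟨i, hD⟩
    rw [show i ∈ S ↔ (⟨i, hD⟩ : Fin D) ∈ {i : Fin D | i.1 ∈ S} from Iff.rfl, ← this]
    have : (fun j => Sum.elim (Sum.elim (a' i) (b' S)) c' j D) =
        Sum.elim (Sum.elim (a D ⟨i, hD⟩) (b D {i | i.1 ∈ S})) (c D) := by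
      funext j
      rcases j with (j | j) | j
      · simp [a', hD]
      · rfl
      · rfl
    rw [this]
  have hev : ∀ᶠ D in (U : Filter ℕ), i < D :=
    Filter.Eventually.filter_mono Nat.hyperfilter_le_atTop (eventually_gt_atTop i)
  rw [e1] at key
  refine key.trans ?_
  constructor
  · intro h
    obtain ⟨D, h1, h2⟩ := (h.and hev).exists
    exact (e2 D h2).1 h1
  · intro h
    filter_upwards [hev] with D hD
    exact (e2 D hD).2 h

/-- Move the tail of the second block of variables to the parameters. -/
def splitA (m n : ℕ) : Fin m ⊕ Fin (n + 1) → (Fin m ⊕ Fin 1) ⊕ Fin n :=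
  Sum.elim (fun i => Sum.inl (Sum.inl i))
    (Fin.cons (Sum.inl (Sum.inr 0)) (fun i => Sum.inr i))

/-- The variables for `φ(x; y, z)` inside the formula with a quantified `y`. -/
def varX (m n k : ℕ) : Fin m ⊕ Fin (n + 1) → ((Fin m ⊕ Fin n) ⊕ Fin k) ⊕ Fin 1 :=
  Sum.elim (fun i => Sum.inl (Sum.inl (Sum.inl i)))
    (Fin.cons (Sum.inr 0) (fun i => Sum.inl (Sum.inl (Sum.inr i))))

/-- The variables for `φ(w_j; y, z)` inside the formula with a quantified `y`. -/
def varW (m n q : ℕ) (j : Fin q) :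
    Fin m ⊕ Fin (n + 1) → ((Fin m ⊕ Fin n) ⊕ Fin (q * m)) ⊕ Fin 1 :=
  Sum.elim (fun i => Sum.inl (Sum.inr (finProdFinEquiv (j, i))))
    (Fin.cons (Sum.inr 0) (fun i => Sum.inl (Sum.inl (Sum.inr i))))

/-- The formula `∃ y, (⋀ j, φ(w_j; y, z) ↔ σ j) ∧ φ(x; y, z)`. -/
noncomputable def psiB {L : FirstOrder.Language.{u, v}} {m n q : ℕ}
    (φ : L.Formula (Fin m ⊕ Fin (n + 1))) (σ : Fin q → Bool) :
    L.Formula ((Fin m ⊕ Fin n) ⊕ Fin (q * m)) :=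
  Formula.iExs (Fin 1)
    ((Formula.iInf fun j : Fin q =>
        if σ j = true then φ.relabel (varW m n q j) else (φ.relabel (varW m n q j)).not) ⊓
      φ.relabel (varX m n (q * m)))

theorem psiB_realize {L : FirstOrder.Language.{u, v}} {N : Type*} [L.Structure N] {m n q : ℕ}
    (φ : L.Formula (Fin m ⊕ Fin (n + 1))) (σ : Fin q → Bool) (x : Fin m → N) (z : Fin n → N)
    (w : Fin q → Fin m → N) :
    (psiB φ σ).Realize (Sum.elim (Sum.elim x z)
        (fun t => w (finProdFinEquiv.symm t).1 (finProdFinEquiv.symm t).2)) ↔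
      ∃ y : N, (∀ i, φ.Realize (Sum.elim (w i) (Fin.cons y z : Fin (n + 1) → N)) ↔ σ i = true) ∧
        φ.Realize (Sum.elim x (Fin.cons y z : Fin (n + 1) → N)) := by
  have hX : ∀ y : Fin 1 → N, (Sum.elim (Sum.elim (Sum.elim x z)
        (fun t => w (finProdFinEquiv.symm t).1 (finProdFinEquiv.symm t).2)) y) ∘ varX m n (q * m) =
      Sum.elim x (Fin.cons (y 0) z : Fin (n + 1) → N) := by
    intro y
    funext j
    rcases j with j | j
    · rfl
    · refine Fin.cases ?_ (fun j => ?_) j <;> simp [varX]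
  have hW : ∀ (i : Fin q) (y : Fin 1 → N), (Sum.elim (Sum.elim (Sum.elim x z)
        (fun t => w (finProdFinEquiv.symm t).1 (finProdFinEquiv.symm t).2)) y) ∘ varW m n q i =
      Sum.elim (w i) (Fin.cons (y 0) z : Fin (n + 1) → N) := by
    intro i y
    funext j
    rcases j with j | j
    · simp only [varW, Function.comp, Sum.elim_inl, Sum.elim_inr, Equiv.symm_apply_apply]
    · refine Fin.cases ?_ (fun j => ?_) j <;> simp [varW]
  have hlit : ∀ (i : Fin q) (y : Fin 1 → N),
      ((if σ i = true then φ.relabel (varW m n q i) else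
        (φ.relabel (varW m n q i)).not).Realize (Sum.elim (Sum.elim (Sum.elim x z)
        (fun t => w (finProdFinEquiv.symm t).1 (finProdFinEquiv.symm t).2)) y) ↔
      (φ.Realize (Sum.elim (w i) (Fin.cons (y 0) z : Fin (n + 1) → N)) ↔ σ i = true)) := by
    intro i y
    by_cases hs : σ i = true
    · rw [if_pos hs, Formula.realize_relabel, hW]
      simp [hs]
    · rw [if_neg hs, Formula.realize_not, Formula.realize_relabel, hW]
      simp [hs]
  rw [psiB, Formula.realize_iExs]
  simp only [Formula.realize_inf, Formula.realize_iInf, hlit, Formula.realize_relabel, hX]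
  constructor
  · rintro ⟨y, hy⟩
    exact ⟨y 0, hy⟩
  · rintro ⟨y, hy⟩
    exact ⟨fun _ => y, hy⟩

/-- If a parameter-free formula `φ(x̄; ȳ)` has the independence property and
`|ȳ| ≥ 2`, then there are a model `M` of `T` and a formula `ψ(x̄; ȳ')` with parameters from
`M`, with `|ȳ'| < |ȳ|`, which has the independence property. -/
theorem independence_property_reduction {L : FirstOrder.Language.{u, v}} (T : L.Theory)
    (hT : T.IsComplete) {m n : ℕ} (hn : 2 ≤ n) (φ : L.Formula (Fin m ⊕ Fin n))
    (hφ : FormulaHasIP T φ) :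
    ∃ (M : FirstOrder.Language.Theory.ModelType.{u, v, max u v} T) (n' k : ℕ),
      n' < n ∧ ∃ (ψ : L.Formula ((Fin m ⊕ Fin n') ⊕ Fin k)) (c : Fin k → M),
        HasIPWithParams ψ c := by
  obtain ⟨n, rfl⟩ : ∃ n', n = n' + 1 := ⟨n - 1, by omega⟩
  obtain ⟨N, a, b, hab⟩ := hφ
  let R : (Fin m → N) → N → (Fin n → N) → Prop := fun x y z =>
    φ.Realize (Sum.elim x (Fin.cons y z : Fin (n + 1) → N))
  by_cases hA : ∀ D, ∃ z, Shat (fun x y => R x y z) D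
  · obtain ⟨M, c, h⟩ := ip_of_shat T N (φ.relabel (splitA m n)) (fun D => by
      obtain ⟨z, x, hx⟩ := hA D
      refine ⟨z, x, fun S => ?_⟩
      obtain ⟨y, hy⟩ := hx S
      refine ⟨fun _ => y, fun i => ?_⟩
      rw [← hy i]
      simp only [Formula.realize_relabel, R]
      have : (Sum.elim (Sum.elim (x i) (fun _ : Fin 1 => y)) z) ∘ splitA m n =
          Sum.elim (x i) (Fin.cons y z : Fin (n + 1) → N) := by
        funext j
        rcases j with j | j
        · rfl
        · refine Fin.cases ?_ (fun j => ?_) j <;> simp [splitA]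
      rw [this])
    exact ⟨M, 1, n, by omega, _, c, h⟩
  · push Not at hA
    obtain ⟨D, hD⟩ := hA
    obtain ⟨q, σ, hσ⟩ := core_s3 R D hD (fun k => by
      refine ⟨fun i => a i, fun S => ?_⟩
      let b0 := b ((fun i : Fin k => (i : ℕ)) '' S)
      refine ⟨(b0 0, Fin.tail b0), fun i => ?_⟩
      simp only [R, Fin.cons_self_tail]
      rw [hab]
      constructor
      · rintro ⟨j, hj, hji⟩
        rwa [← Fin.ext hji]
      · exact fun hi => ⟨i, hi, rfl⟩)
    obtain ⟨M, c, h⟩ := ip_of_shat T N (psiB φ σ) (fun E => by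
      obtain ⟨w, hw⟩ := hσ E
      refine ⟨fun t => w (finProdFinEquiv.symm t).1 (finProdFinEquiv.symm t).2, ?_⟩
      simp only [psiB_realize]
      exact hw)
    exact ⟨M, n, q * m, by omega, _, c, h⟩
end
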